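/- arXiv:2401.01135 — 4 statements merged into one kernel-verified Lean document; each statement's English description precedes it below -/
import Mathlib

section
/- Let q > 2 be a prime power and m = 2r with r ≥ 2, and set n = q^{r−1}(q^r − q + 1). Then the code \overline{C_D}' generated by the rows of [I_{m+1} | G_1] has length n + m + 1, dimension m + 1, and minimum distance d' satisfying d' ≥ q^{r−1}(q^r − q^{r−1} − q + 1) + 1. Moreover, its dual (\overline{C_D}')^⊥ has length n + m + 1, dimension n, and minimum distance d'^⊥ satisfying 2 ≤ d'^⊥ ≤ 3. -/
open scoped Classical

noncomputable section

/-- The dual code under the standard inner product. -/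
def dualCode {ι F : Type*} [Fintype ι] [CommRing F] (C : Set (ι → F)) : Set (ι → F) :=
  {u | ∀ v ∈ C, ∑ i, u i * v i = 0}

/-- `d` is the minimum distance of the code `C`: the smallest Hamming weight of a
nonzero codeword. -/
def IsMinDist {ι F : Type*} [Fintype ι] [CommRing F] (C : Set (ι → F)) (d : ℕ) : Prop :=
  (∃ c ∈ C, c ≠ 0 ∧ hammingNorm c = d) ∧ ∀ c ∈ C, c ≠ 0 → d ≤ hammingNorm c

/-- The code generated by the rows of the block matrix `[I_k | G]`: the codeword
attached to a coefficient vector `v : Fin k → F` is `v` on the first `k`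
coordinates and `v * G` on the remaining coordinates. -/
def genCode {ι F : Type*} [Fintype ι] [CommRing F] (k : ℕ) (G : Fin k → ι → F) :
    Set ((Fin k ⊕ ι) → F) :=
  {w | ∃ v : Fin k → F, w = Sum.elim v fun d => ∑ j, v j * G j d}

theorem aux_fiber {M F : Type*} [AddCommGroup M] [AddCommGroup F] [Fintype M] [Fintype F]
    (f : M →+ F) (hf : Function.Surjective f) (z : F) :
    (Finset.univ.filter fun x => f x = z).card * Fintype.card F = Fintype.card M := by
  have h1 : ∀ z' : F, (Finset.univ.filter fun x => f x = z').card
      = (Finset.univ.filter fun x => f x = z).card := by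
    intro z'
    obtain ⟨y, hy⟩ := hf (z - z')
    refine Finset.card_bij (fun x _ => x + y) ?_ ?_ ?_
    · intro x hx
      simp only [Finset.mem_filter, Finset.mem_univ, true_and] at hx ⊢
      rw [map_add, hx, hy]; abel
    · intro a _ b _ h
      exact add_right_cancel h
    · intro x hx
      simp only [Finset.mem_filter, Finset.mem_univ, true_and] at hx
      refine ⟨x - y, ?_, by abel⟩
      simp only [Finset.mem_filter, Finset.mem_univ, true_and]
      rw [map_sub, hx, hy]; abel
  have h2 := Finset.card_eq_sum_card_fiberwise (f := f) (s := Finset.univ) (t := Finset.univ)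
    (fun x _ => Finset.mem_coe.2 (Finset.mem_univ _))
  rw [Finset.card_univ] at h2
  rw [h2, Finset.sum_congr rfl (fun z' _ => h1 z'), Finset.sum_const, Finset.card_univ,
    smul_eq_mul, mul_comm]

/-- The norm map has fibres of size at most `N + 1`. -/
theorem aux_norm_fiber {Fr Fm : Type*} [Field Fr] [Field Fm] [Fintype Fr] [Fintype Fm]
    [Algebra Fr Fm] (N : ℕ) (g : Fm → Fr)
    (hg : ∀ x : Fm, algebraMap Fr Fm (g x) = x ^ (N + 1)) (k : Fr) :
    (Finset.univ.filter fun x => g x = k).card ≤ N + 1 := by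
  have h : (Finset.univ.filter fun x => g x = k)
      ⊆ (Polynomial.nthRoots (N + 1) (algebraMap Fr Fm k)).toFinset := by
    intro x hx
    simp only [Finset.mem_filter, Finset.mem_univ, true_and] at hx
    rw [Multiset.mem_toFinset, Polynomial.mem_nthRoots (Nat.succ_pos N), ← hg, hx]
  exact (Finset.card_le_card h).trans
    ((Multiset.toFinset_card_le _).trans (Polynomial.card_nthRoots _ _))

theorem aux_norm_fiber_zero {Fr Fm : Type*} [Field Fr] [Field Fm] [Fintype Fr] [Fintype Fm]
    [Algebra Fr Fm] (N : ℕ) (g : Fm → Fr)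
    (hg : ∀ x : Fm, algebraMap Fr Fm (g x) = x ^ (N + 1)) :
    (Finset.univ.filter fun x => g x = 0).card = 1 := by
  rw [Finset.card_eq_one]
  refine ⟨0, ?_⟩
  ext x
  simp only [Finset.mem_filter, Finset.mem_univ, true_and, Finset.mem_singleton]
  rw [← (algebraMap Fr Fm).injective.eq_iff, hg, map_zero]
  simp

/-- Fibres of `Tr ∘ g`. -/
theorem aux_quad_count {Fq Fr Fm : Type*} [Field Fq] [Field Fr] [Field Fm]
    [Fintype Fq] [Fintype Fr] [Fintype Fm] [Algebra Fq Fr] [Algebra Fr Fm]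
    (q Q : ℕ) (hq : 1 ≤ q) (hQ : 1 ≤ Q)
    (hcq : Fintype.card Fq = q) (hcr : Fintype.card Fr = q * Q)
    (hcm : Fintype.card Fm = (q * Q) ^ 2)
    (g : Fm → Fr) (hg : ∀ x : Fm, algebraMap Fr Fm (g x) = x ^ (q * Q + 1)) :
    (∀ z, (Finset.univ.filter fun x => Algebra.trace Fq Fr (g x) = z).card ≤ Q * (q * Q + 1)) ∧
    (Finset.univ.filter fun x => Algebra.trace Fq Fr (g x) = 0).card = Q * (q * Q - q + 1) := by
  have htr : ∀ z : Fq, (Finset.univ.filter fun y => Algebra.trace Fq Fr y = z).card = Q := by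
    intro z
    have := aux_fiber (Algebra.trace Fq Fr).toAddMonoidHom (Algebra.trace_surjective Fq Fr) z
    rw [hcq, hcr, mul_comm] at this
    exact Nat.eq_of_mul_eq_mul_left (by omega) this
  have hfib : ∀ z : Fq, (Finset.univ.filter fun x => Algebra.trace Fq Fr (g x) = z).card
      = ∑ k ∈ Finset.univ.filter (fun y => Algebra.trace Fq Fr y = z),
        (Finset.univ.filter fun x => g x = k).card := by
    intro z
    rw [Finset.card_eq_sum_card_fiberwise (f := g)
      (t := Finset.univ.filter (fun y => Algebra.trace Fq Fr y = z))]
    · refine Finset.sum_congr rfl fun k hk => ?_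
      congr 1
      ext x
      simp only [Finset.mem_filter, Finset.mem_univ, true_and] at hk ⊢
      constructor
      · exact fun h => h.2
      · intro h; exact ⟨by rw [h, hk], h⟩
    · intro x hx
      simpa using hx
  have hle : ∀ z, (Finset.univ.filter fun x => Algebra.trace Fq Fr (g x) = z).card
      ≤ Q * (q * Q + 1) := by
    intro z
    rw [hfib z]
    refine (Finset.sum_le_card_nsmul _ _ (q * Q + 1)
      fun k _ => aux_norm_fiber (q * Q) g hg k).trans ?_
    rw [htr z, smul_eq_mul]
  have h0 : (Finset.univ.filter fun x => Algebra.trace Fq Fr (g x) = 0).card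
      ≤ 1 + (Q - 1) * (q * Q + 1) := by
    rw [hfib 0]
    have hmem : (0 : Fr) ∈ Finset.univ.filter (fun y => Algebra.trace Fq Fr y = 0) := by simp
    rw [← Finset.add_sum_erase _ _ hmem, aux_norm_fiber_zero (q * Q) g hg]
    refine Nat.add_le_add_left ?_ 1
    refine (Finset.sum_le_card_nsmul _ _ (q * Q + 1)
      fun k _ => aux_norm_fiber (q * Q) g hg k).trans ?_
    rw [Finset.card_erase_of_mem hmem, htr 0, smul_eq_mul]
  have htot := Finset.card_eq_sum_card_fiberwise (f := fun x => Algebra.trace Fq Fr (g x))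
    (s := Finset.univ) (t := Finset.univ) (fun x _ => Finset.mem_coe.2 (Finset.mem_univ _))
  rw [Finset.card_univ, hcm, ← Finset.add_sum_erase _ _ (Finset.mem_univ (0 : Fq))] at htot
  have hrest := Finset.sum_le_card_nsmul (Finset.univ.erase (0 : Fq)) _ (Q * (q * Q + 1))
    fun k _ => hle k
  rw [Finset.card_erase_of_mem (Finset.mem_univ _), Finset.card_univ, hcq, smul_eq_mul] at hrest
  refine ⟨hle, ?_⟩
  obtain ⟨q, rfl⟩ : ∃ q', q = q' + 1 := ⟨q - 1, by omega⟩
  obtain ⟨Q, rfl⟩ : ∃ q', Q = q' + 1 := ⟨Q - 1, by omega⟩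
  have e : (q + 1) * (Q + 1) - (q + 1) = (q + 1) * Q := by
    rw [mul_add, mul_one, Nat.add_sub_cancel]
  rw [e]
  simp only [Nat.add_sub_cancel] at h0 hrest
  nlinarith

/-- Every affine hyperplane section of the quadric has at most `Q ^ 2` points. -/
theorem aux_section {Fq Fr Fm : Type*} [Field Fq] [Field Fr] [Field Fm]
    [Fintype Fq] [Fintype Fr] [Fintype Fm] [Algebra Fq Fr] [Algebra Fr Fm]
    [Algebra Fq Fm] [IsScalarTower Fq Fr Fm]
    (q Q : ℕ) (hq : 1 ≤ q) (hQ : 1 ≤ Q)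
    (hcq : Fintype.card Fq = q) (hcr : Fintype.card Fr = q * Q)
    (hcm : Fintype.card Fm = (q * Q) ^ 2)
    (g : Fm → Fr) (hg : ∀ x : Fm, algebraMap Fr Fm (g x) = x ^ (q * Q + 1))
    (b : Fm) (hb : b ≠ 0) (t : Fq) :
    (Finset.univ.filter fun x => Algebra.trace Fq Fm (b * x) = t ∧
      Algebra.trace Fq Fr (g x) = 0).card ≤ Q ^ 2 := by
  obtain ⟨hle, h0⟩ := aux_quad_count q Q hq hQ hcq hcr hcm g hg
  -- the additive structure
  have hfin : Module.finrank Fr Fm = 2 := by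
    have h1 := Module.card_eq_pow_finrank (K := Fr) (V := Fm)
    rw [hcm, hcr] at h1
    have h2 : 1 < q * Q := by rw [← hcr]; exact Fintype.one_lt_card
    exact (Nat.pow_right_injective h2 h1).symm
  have htrm : ∀ y : Fm, algebraMap Fr Fm (Algebra.trace Fr Fm y) = y + y ^ (q * Q) := by
    intro y
    rw [FiniteField.algebraMap_trace_eq_sum_pow, hfin]
    simp [Finset.sum_range_succ, hcr]
  have hfrob : ∀ x y : Fm, (x + y) ^ (q * Q) = x ^ (q * Q) + y ^ (q * Q) := by
    intro x y
    have := map_add (FiniteField.frobeniusAlgHom Fr Fm) x y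
    simpa [hcr] using this
  have hsub : ∀ u : Fr, (algebraMap Fr Fm u) ^ (q * Q) = algebraMap Fr Fm u := by
    intro u
    rw [← map_pow, ← hcr, FiniteField.pow_card]
  have hbb : (b ^ (q * Q)) ^ (q * Q) = b := by
    rw [← pow_mul, ← sq, ← hcm, FiniteField.pow_card]
  have hQadd : ∀ (x : Fm) (u : Fq),
      Algebra.trace Fq Fr (g (x + algebraMap Fq Fm u * b ^ (q * Q)))
      = Algebra.trace Fq Fr (g x) + u * Algebra.trace Fq Fm (b * x)
        + u ^ 2 * Algebra.trace Fq Fr (g b) := by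
    intro x u
    have : g (x + algebraMap Fq Fm u * b ^ (q * Q))
        = g x + u • Algebra.trace Fr Fm (b * x) + (u ^ 2) • g b := by
      apply (algebraMap Fr Fm).injective
      rw [map_add, map_add, Algebra.smul_def, Algebra.smul_def,
        (algebraMap Fr Fm).map_mul, (algebraMap Fr Fm).map_mul, hg, hg, hg, htrm,
        ← IsScalarTower.algebraMap_apply, ← IsScalarTower.algebraMap_apply,
        pow_succ _ (q * Q), hfrob, mul_pow, hbb, IsScalarTower.algebraMap_apply Fq Fr Fm u, hsub,
        map_pow, IsScalarTower.algebraMap_apply Fq Fr Fm u]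
      ring
    rw [this, map_add, map_add, map_smul, map_smul, Algebra.trace_trace, smul_eq_mul, smul_eq_mul]
  -- number of points on the lines
  have hline : ∀ u : Fq, (Finset.univ.filter fun x =>
      Algebra.trace Fq Fr (g x) + u * (Algebra.trace Fq Fm (b * x) - t) = 0).card
      = (Finset.univ.filter fun x => Algebra.trace Fq Fr (g x)
        = u * t + u ^ 2 * Algebra.trace Fq Fr (g b)).card := by
    intro u
    refine Finset.card_bij (fun x _ => x + algebraMap Fq Fm u * b ^ (q * Q)) ?_ ?_ ?_
    · intro x hx
      simp only [Finset.mem_filter, Finset.mem_univ, true_and] at hx ⊢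
      rw [hQadd]
      linear_combination hx
    · intro x _ y _ h
      exact add_right_cancel h
    · intro x hx
      simp only [Finset.mem_filter, Finset.mem_univ, true_and] at hx
      refine ⟨x - algebraMap Fq Fm u * b ^ (q * Q), ?_, by ring⟩
      simp only [Finset.mem_filter, Finset.mem_univ, true_and]
      have := hQadd (x - algebraMap Fq Fm u * b ^ (q * Q)) u
      rw [sub_add_cancel, hx] at this
      linear_combination -this
  have hsum : ∑ u : Fq, (Finset.univ.filter fun x =>
      Algebra.trace Fq Fr (g x) + u * (Algebra.trace Fq Fm (b * x) - t) = 0).card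
      ≤ Q * (q * Q - q + 1) + (q - 1) * (Q * (q * Q + 1)) := by
    rw [← Finset.add_sum_erase _ _ (Finset.mem_univ (0 : Fq))]
    refine Nat.add_le_add ?_ ?_
    · rw [hline, ← h0]; simp
    · refine (Finset.sum_le_card_nsmul _ _ (Q * (q * Q + 1))
        fun u _ => by rw [hline]; exact hle _).trans ?_
      rw [Finset.card_erase_of_mem (Finset.mem_univ _), Finset.card_univ, hcq, smul_eq_mul]
  -- the hyperplane
  have hhyp : (Finset.univ.filter fun x => Algebra.trace Fq Fm (b * x) = t).card * q
      = (q * Q) ^ 2 := by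
    rw [← hcq, ← hcq] at *
    rw [← hcm]
    refine aux_fiber ((Algebra.trace Fq Fm).toAddMonoidHom.comp (AddMonoidHom.mulLeft b)) ?_ t
    intro z
    obtain ⟨y, hy⟩ := Algebra.trace_surjective Fq Fm z
    refine ⟨b⁻¹ * y, ?_⟩
    simp [mul_inv_cancel_left₀ hb, hy]
  -- double counting
  have hcount : ∑ u : Fq, (Finset.univ.filter fun x =>
      Algebra.trace Fq Fr (g x) + u * (Algebra.trace Fq Fm (b * x) - t) = 0).card
      = ∑ x : Fm, (Finset.univ.filter fun u : Fq =>
      Algebra.trace Fq Fr (g x) + u * (Algebra.trace Fq Fm (b * x) - t) = 0).card := by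
    simp only [Finset.card_filter]
    rw [Finset.sum_comm]
  have hx : ∀ x : Fm, (Finset.univ.filter fun u : Fq =>
      Algebra.trace Fq Fr (g x) + u * (Algebra.trace Fq Fm (b * x) - t) = 0).card
      + (if Algebra.trace Fq Fm (b * x) = t then 1 else 0)
      = 1 + q * (if Algebra.trace Fq Fm (b * x) = t ∧ Algebra.trace Fq Fr (g x) = 0
          then 1 else 0) := by
    intro x
    by_cases h1 : Algebra.trace Fq Fm (b * x) = t
    · by_cases h2 : Algebra.trace Fq Fr (g x) = 0
      · simp [h1, h2, hcq, add_comm]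
      · simp [h1, h2]
    · have h3 : Algebra.trace Fq Fm (b * x) - t ≠ 0 := sub_ne_zero.2 h1
      have : (Finset.univ.filter fun u : Fq =>
        Algebra.trace Fq Fr (g x) + u * (Algebra.trace Fq Fm (b * x) - t) = 0)
        = {-(Algebra.trace Fq Fr (g x)) / (Algebra.trace Fq Fm (b * x) - t)} := by
        ext u
        simp only [Finset.mem_filter, Finset.mem_univ, true_and, Finset.mem_singleton]
        rw [eq_div_iff h3]
        constructor <;> intro h <;> linear_combination h
      rw [this]
      simp [h1]
  have hfinal := Finset.sum_congr (rfl : (Finset.univ : Finset Fm) = Finset.univ)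
    (fun x _ => hx x)
  rw [Finset.sum_add_distrib, ← hcount, Finset.sum_add_distrib, ← Finset.mul_sum,
    ← Finset.card_filter, ← Finset.card_filter, Finset.sum_const, Finset.card_univ, hcm,
    smul_eq_mul, mul_one] at hfinal
  generalize (Finset.univ.filter fun x => Algebra.trace Fq Fm (b * x) = t ∧
      Algebra.trace Fq Fr (g x) = 0).card = A at *
  generalize (Finset.univ.filter fun x => Algebra.trace Fq Fm (b * x) = t).card = H at *
  have hH : H = q * Q ^ 2 := by
    apply Nat.eq_of_mul_eq_mul_right (show 0 < q by omega)
    rw [hhyp]; ring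
  have key : Q * (q * Q - q + 1) + (q - 1) * (Q * (q * Q + 1)) = (q * Q) ^ 2 := by
    obtain ⟨q, rfl⟩ : ∃ q', q = q' + 1 := ⟨q - 1, by omega⟩
    obtain ⟨Q, rfl⟩ : ∃ q', Q = q' + 1 := ⟨Q - 1, by omega⟩
    have e : (q + 1) * (Q + 1) - (q + 1) = (q + 1) * Q := by
      rw [mul_add, mul_one, Nat.add_sub_cancel]
    rw [e, Nat.add_sub_cancel]
    ring
  rw [key] at hsum
  have : q * A ≤ q * Q ^ 2 := by
    rw [hH] at hfinal
    omega
  exact Nat.le_of_mul_le_mul_left this (by omega)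

theorem aux_indep {Fq Fm : Type*} [Field Fq] [Field Fm] [Fintype Fq] [Fintype Fm]
    [Algebra Fq Fm] (q m : ℕ) (hcq : Fintype.card Fq = q) (hcm : Fintype.card Fm = q ^ m)
    (α : Fm) (hα : ∀ y : Fm, y ≠ 0 → ∃ k : ℕ, α ^ k = y) (v : Fin m → Fq)
    (hv : ∑ k, algebraMap Fq Fm (v k) * α ^ (k : ℕ) = 0) : v = 0 := by
  have hfin : Module.finrank Fq Fm = m := by
    have h1 := Module.card_eq_pow_finrank (K := Fq) (V := Fm)
    rw [hcm, hcq] at h1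
    have h2 : 1 < q := by rw [← hcq]; exact Fintype.one_lt_card
    exact (Nat.pow_right_injective h2 h1).symm
  have htop : IntermediateField.adjoin Fq {α} = ⊤ := by
    rw [eq_top_iff]
    intro y _
    by_cases hy : y = 0
    · rw [hy]; exact zero_mem _
    · obtain ⟨k, rfl⟩ := hα y hy
      exact pow_mem (IntermediateField.mem_adjoin_simple_self Fq α) k
  have hdeg := (Field.primitive_element_iff_minpoly_natDegree_eq Fq α).1 htop
  rw [hfin] at hdeg
  have hli := linearIndependent_pow (K := Fq) α
  rw [hdeg] at hli
  rw [Fintype.linearIndependent_iff] at hli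
  funext k
  refine hli v ?_ k
  simpa [Algebra.smul_def] using hv

theorem aux_norm_elim {A B F : Type*} [Fintype A] [Fintype B] [Zero F] (v : A → F) (f : B → F) :
    hammingNorm (Sum.elim v f) = hammingNorm v + hammingNorm f := by
  unfold hammingNorm
  rw [Finset.card_filter, Finset.card_filter, Finset.card_filter, Fintype.sum_sum_type]
  simp only [Sum.elim_inl, Sum.elim_inr]
  congr!

theorem aux_norm_zero {B F : Type*} [Fintype B] [Zero F] (f : B → F) :
    hammingNorm f + (Finset.univ.filter fun x => f x = 0).card = Fintype.card B := by
  unfold hammingNorm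
  rw [add_comm, Finset.card_filter_add_card_filter_not, Finset.card_univ]

theorem aux_dual {ι F : Type*} [Fintype ι] [CommRing F] (k : ℕ) (G : Fin k → ι → F)
    (w : Fin k ⊕ ι → F) :
    w ∈ dualCode (genCode k G) ↔
      ∃ u : ι → F, w = Sum.elim (fun j => -∑ d, u d * G j d) u := by
  constructor
  · intro h
    refine ⟨fun d => w (Sum.inr d), ?_⟩
    funext i
    rcases i with j | d
    · have := h _ ⟨Pi.single j 1, rfl⟩
      rw [Fintype.sum_sum_type] at this
      simp [Pi.single_apply] at this
      simpa using eq_neg_of_add_eq_zero_left this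
    · rfl
  · rintro ⟨u, rfl⟩ v ⟨c, rfl⟩
    rw [Fintype.sum_sum_type]
    simp only [Sum.elim_inl, Sum.elim_inr, Finset.mul_sum, neg_mul, Finset.sum_neg_distrib,
      Finset.sum_mul]
    rw [Finset.sum_comm, neg_add_eq_zero]
    refine Finset.sum_congr rfl fun d _ => Finset.sum_congr rfl fun j _ => by ring

theorem stmt9 (p a q r m n : ℕ) (hp : p.Prime) (ha : 0 < a) (hqpa : q = p ^ a)
    (hq2 : 2 < q) (hr : 2 ≤ r) (hm : m = 2 * r)
    (hn : n = q ^ (r - 1) * (q ^ r - q + 1))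
    (Fq Fr Fm : Type) [Field Fq] [Field Fr] [Field Fm]
    [Fintype Fq] [Fintype Fr] [Fintype Fm]
    [Algebra Fq Fr] [Algebra Fr Fm] [Algebra Fq Fm] [IsScalarTower Fq Fr Fm]
    (hcq : Fintype.card Fq = q) (hcr : Fintype.card Fr = q ^ r)
    (hcm : Fintype.card Fm = q ^ m)
    (g : Fm → Fr) (hg : ∀ x : Fm, algebraMap Fr Fm (g x) = x ^ (q ^ r + 1))
    -- `α` is a primitive element of `F_{q^m}`
    (α : Fm) (hα : ∀ y : Fm, y ≠ 0 → ∃ k : ℕ, α ^ k = y)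
    -- the matrix `G₁`
    (G1 : Fin (m + 1) → {x : Fm // Algebra.trace Fq Fr (g x) = 0} → Fq)
    (hG1 : ∀ k d, G1 k d =
      if (k : ℕ) = 0 then 1
      else Algebra.trace Fq Fm (α ^ ((k : ℕ) - 1) * d.1)
        + (if (k : ℕ) = 2 then 1 else 0))
    (C' : Set ((Fin (m + 1) ⊕ {x : Fm // Algebra.trace Fq Fr (g x) = 0}) → Fq))
    (hC' : C' = genCode (m + 1) G1) :
    -- length `n + m + 1`
    Fintype.card (Fin (m + 1) ⊕ {x : Fm // Algebra.trace Fq Fr (g x) = 0})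
      = n + m + 1 ∧
    -- dimension `m + 1`
    Nat.card C' = q ^ (m + 1) ∧
    -- minimum distance at least `q^{r-1}(q^r - q^{r-1} - q + 1) + 1`
    (∀ c ∈ C', c ≠ 0 →
      q ^ (r - 1) * (q ^ r - q ^ (r - 1) - q + 1) + 1 ≤ hammingNorm c) ∧
    -- the dual has dimension `n` and minimum distance between `2` and `3`
    Nat.card (dualCode C') = q ^ n ∧
    (∃ d : ℕ, IsMinDist (dualCode C') d ∧ 2 ≤ d ∧ d ≤ 3) := by
  obtain ⟨Q, hQ⟩ : ∃ Q, Q = q ^ (r - 1) := ⟨_, rfl⟩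
  have hqr : q ^ r = q * Q := by
    rw [hQ, ← pow_succ', Nat.sub_add_cancel (by omega)]
  have hqm : q ^ m = (q * Q) ^ 2 := by
    rw [hm, ← hqr, ← pow_mul, mul_comm]
  have hQq : q ≤ Q := by
    rw [hQ]
    exact Nat.le_self_pow (by omega) q
  rw [hqr] at hcr hn hg
  rw [← hQ] at hn
  have hcm2 := hcm
  rw [hqm] at hcm2
  rw [hqr, ← hQ]
  obtain ⟨hle, h0⟩ := aux_quad_count (Fq := Fq) q Q (by omega) (by omega) hcq hcr hcm2 g hg
  have hsec := aux_section (Fq := Fq) q Q (by omega) (by omega) hcq hcr hcm2 g hg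
  have hcD : Fintype.card {x : Fm // Algebra.trace Fq Fr (g x) = 0} = n := by
    rw [hn, ← h0, Fintype.card_subtype]
  have hrow0 : ∀ d, G1 0 d = 1 := by
    intro d
    rw [hG1]
    simp
  subst hC'
  refine ⟨?_, ?_, ?_, ?_, ?_⟩
  · rw [Fintype.card_sum, Fintype.card_fin, hcD]
    ring
  · have e : (Fin (m + 1) → Fq) ≃ genCode (m + 1) G1 :=
      Equiv.ofBijective (fun v => ⟨Sum.elim v fun d => ∑ j, v j * G1 j d, v, rfl⟩) (by
        constructor
        · intro v v' h
          funext j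
          exact congrFun (congrArg Subtype.val h) (Sum.inl j)
        · rintro ⟨w, v, rfl⟩
          exact ⟨v, rfl⟩)
    rw [← Nat.card_congr e, Nat.card_eq_fintype_card, Fintype.card_fun, Fintype.card_fin, hcq]
  · rintro c ⟨v, rfl⟩ hc
    have hv : v ≠ 0 := by
      rintro rfl
      apply hc
      funext i
      rcases i with j | d <;> simp
    rw [aux_norm_elim]
    have hv1 : 1 ≤ hammingNorm v := hammingNorm_pos_iff.2 hv
    obtain ⟨b, hb⟩ : ∃ b, b = ∑ k : Fin m, algebraMap Fq Fm (v k.succ) * α ^ (k : ℕ) := ⟨_, rfl⟩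
    obtain ⟨s, hs⟩ : ∃ s, s = v 0 + ∑ k : Fin m, v k.succ * (if (k : ℕ) + 1 = 2 then 1 else 0) :=
      ⟨_, rfl⟩
    have hf : (fun d => ∑ j, v j * G1 j d) = fun d => Algebra.trace Fq Fm (b * d.1) + s := by
      funext d
      rw [Fin.sum_univ_succ, hrow0, hs, hb, Finset.sum_mul, map_sum, mul_one, add_left_comm,
        ← Finset.sum_add_distrib]
      congr 1
      refine Finset.sum_congr rfl fun k _ => ?_
      rw [hG1, mul_assoc, ← Algebra.smul_def, map_smul, smul_eq_mul, ← mul_add]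
      simp
    rw [hf]
    have hz := aux_norm_zero
      (fun d : {x : Fm // Algebra.trace Fq Fr (g x) = 0} => Algebra.trace Fq Fm (b * d.1) + s)
    rw [hcD] at hz
    have hzle : (Finset.univ.filter
        fun d : {x : Fm // Algebra.trace Fq Fr (g x) = 0} =>
          Algebra.trace Fq Fm (b * d.1) + s = 0).card ≤ Q ^ 2 := by
      by_cases hb0 : b = 0
      · have hv0 := aux_indep q m hcq hcm α hα (fun k => v k.succ) (by rw [← hb, hb0])
        have hs0 : s ≠ 0 := by
          intro h
          apply hv
          have hk : ∀ k : Fin m, v k.succ = 0 := fun k => congrFun hv0 k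
          rw [h] at hs
          simp only [hk, zero_mul, Finset.sum_const_zero, add_zero] at hs
          funext j
          refine Fin.cases ?_ ?_ j
          · exact hs.symm
          · exact hk
        simp [hb0, hs0]
      · refine le_trans ?_ (hsec b hb0 (-s))
        refine Finset.card_le_card_of_injOn Subtype.val ?_ Subtype.val_injective.injOn
        intro d hd
        simp only [Finset.coe_filter, Finset.mem_univ, true_and, Set.mem_ofPred_eq] at hd ⊢
        exact ⟨eq_neg_of_add_eq_zero_left hd, d.2⟩
    have hfin : Q * (q * Q - Q - q + 1) + Q ^ 2 = n := by
      rw [hn]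
      have h1 : Q + q ≤ q * Q := by nlinarith
      have h2 : q * Q - q + 1 = (q * Q - Q - q + 1) + Q := by omega
      rw [h2]
      ring
    omega
  · have e : ({x : Fm // Algebra.trace Fq Fr (g x) = 0} → Fq) ≃ dualCode (genCode (m + 1) G1) :=
      Equiv.ofBijective (fun u => ⟨Sum.elim (fun j => -∑ d, u d * G1 j d) u,
        (aux_dual _ _ _).2 ⟨u, rfl⟩⟩) (by
        constructor
        · intro v v' h
          funext j
          exact congrFun (congrArg Subtype.val h) (Sum.inr j)
        · rintro ⟨w, hw⟩
          obtain ⟨u, rfl⟩ := (aux_dual _ _ _).1 hw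
          exact ⟨u, rfl⟩)
    rw [← Nat.card_congr e, Nat.card_eq_fintype_card, Fintype.card_fun, hcD, hcq]
  · have hg0 : g 0 = 0 := by
      apply (algebraMap Fr Fm).injective
      rw [hg, map_zero, zero_pow (Nat.succ_ne_zero _)]
    obtain ⟨d0, hd0⟩ : ∃ d0 : {x : Fm // Algebra.trace Fq Fr (g x) = 0}, d0.1 = 0 :=
      ⟨⟨0, by rw [hg0, map_zero]⟩, rfl⟩
    have hex : ∃ d, ∃ c ∈ dualCode (genCode (m + 1) G1), c ≠ 0 ∧ hammingNorm c = d ∧ d ≤ 3 := by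
      refine ⟨_, _, (aux_dual _ _ _).2 ⟨Pi.single d0 1, rfl⟩, ?_, rfl, ?_⟩
      · intro h
        have := congrFun h (Sum.inr d0)
        simp at this
      · rw [aux_norm_elim]
        have h1 : hammingNorm (Pi.single d0 1 :
            {x : Fm // Algebra.trace Fq Fr (g x) = 0} → Fq) ≤ 1 := by
          unfold hammingNorm
          refine (Finset.card_le_card (t := {d0}) ?_).trans (by simp)
          intro d hd
          by_contra hne
          simp at hne
          simp [Pi.single_apply, hne] at hd
        have h2 : hammingNorm (fun j => -∑ d, (Pi.single d0 1 :
            {x : Fm // Algebra.trace Fq Fr (g x) = 0} → Fq) d * G1 j d) ≤ 2 := by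
          unfold hammingNorm
          refine (Finset.card_le_card (t := {0, ⟨2, by omega⟩}) ?_).trans Finset.card_le_two
          intro j hj
          by_contra hne
          simp only [Finset.mem_insert, Finset.mem_singleton, not_or, Fin.ext_iff,
            Fin.val_zero] at hne
          simp [Pi.single_apply, hG1, hd0, hne.2] at hj
          exact hne.1 (by rw [hj]; rfl)
        omega
    have hmin : ∃ d, ∃ c ∈ dualCode (genCode (m + 1) G1), c ≠ 0 ∧ hammingNorm c = d := by
      obtain ⟨d, c, h1, h2, h3, _⟩ := hex
      exact ⟨d, c, h1, h2, h3⟩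
    refine ⟨Nat.find hmin, ⟨Nat.find_spec hmin, fun c hc hc0 => Nat.find_min' hmin
      ⟨c, hc, hc0, rfl⟩⟩, ?_, ?_⟩
    · obtain ⟨c, hc, hc0, hcd⟩ := Nat.find_spec hmin
      rw [← hcd]
      obtain ⟨u, rfl⟩ := (aux_dual _ _ _).1 hc
      have hu : u ≠ 0 := by
        rintro rfl
        apply hc0
        funext i
        rcases i with j | d <;> simp
      rw [aux_norm_elim]
      have hu1 : 1 ≤ hammingNorm u := hammingNorm_pos_iff.2 hu
      by_contra hlt
      have h1 : hammingNorm u = 1 := by omega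
      have h2 : (fun j => -∑ d, u d * G1 j d) = 0 := hammingNorm_eq_zero.1 (by omega)
      have h3 := congrFun h2 0
      simp only [hrow0, mul_one, Pi.zero_apply, neg_eq_zero] at h3
      unfold hammingNorm at h1
      obtain ⟨d, hd⟩ := Finset.card_eq_one.1 h1
      have hd' : ∀ x, u x ≠ 0 ↔ x = d := by
        intro x
        have := Finset.ext_iff.1 hd x
        simpa using this
      rw [Finset.sum_eq_single d] at h3
      · exact (hd' d).2 rfl h3
      · intro x _ hx
        by_contra hne
        exact hx ((hd' x).1 hne)
      · intro h; exact absurd (Finset.mem_univ _) h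
    · obtain ⟨d, c, h1, h2, h3, h4⟩ := hex
      exact (Nat.find_min' hmin ⟨c, h1, h2, h3⟩).trans h4
end
end

section
/- Let q = p^e with p an odd prime and e a positive integer, let m ≥ 3 be odd, and set l = e(p−1)(m+3)/4 (an integer). Let s ∈ F_q^*, b ∈ F_{q^m}^*, and let N_s be the number of x ∈ F_{q^m} satisfying both Tr_{q^m/q}(bx) = s and Tr_{q^m/q}(x²) = 0. Then N_s = q^{m−2} if Tr_{q^m/q}(b²) = 0, and N_s = q^{m−2} − (−1)^l η(Tr_{q^m/q}(b²)) q^{(m−3)/2} if Tr_{q^m/q}(b²) ≠ 0. -/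
open scoped Classical

noncomputable section

/-- The quadratic character of a finite field: `1` on nonzero squares, `-1` on
nonsquares, `0` at `0`. -/
def qchar (F : Type*) [MonoidWithZero F] : F → ℤ :=
  fun y => if y = 0 then 0 else if IsSquare y then 1 else -1

/-- complex-valued quadratic character -/
def cchi (F : Type) [Field F] [Fintype F] : MulChar F ℂ :=
  (quadraticChar F).ringHomComp (Int.castRingHom ℂ)

lemma cchi_apply (F : Type) [Field F] [Fintype F] (a : F) :
    cchi F a = ((quadraticChar F a : ℤ) : ℂ) := rfl

lemma cchi_sq (F : Type) [Field F] [Fintype F] {a : F} (ha : a ≠ 0) :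
    cchi F a * cchi F a = 1 := by
  have := quadraticChar_sq_one (F := F) ha
  rw [cchi_apply]; exact_mod_cast (by rw [← this, sq] : quadraticChar F a * quadraticChar F a = 1)

lemma sum_sq (F : Type) [Field F] [Fintype F] (hF : ringChar F ≠ 2) (ψ : AddChar F ℂ)
    (hψ : ψ.IsPrimitive) {a : F} (ha : a ≠ 0) :
    ∑ x : F, ψ (a * x ^ 2) = cchi F a * gaussSum (cchi F) ψ := by
  have h1 : ∑ x : F, ψ (a * x ^ 2) = ∑ y : F, (cchi F y + 1) * ψ (a * y) := by
    rw [← Finset.sum_fiberwise (s := Finset.univ) (g := fun x : F => x ^ 2)]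
    refine Finset.sum_congr rfl fun y _ => ?_
    have h := quadraticChar_card_sqrts hF y
    have h2 : ((cchi F y : ℂ) + 1) = ((Finset.univ.filter fun x : F => x ^ 2 = y).card : ℂ) := by
      rw [cchi_apply]
      have h3 : (({x : F | x ^ 2 = y}.toFinset).card : ℤ)
          = ((Finset.univ.filter fun x : F => x ^ 2 = y).card : ℤ) := by
        congr 2; ext; simp
      rw [h3] at h
      exact_mod_cast h.symm
    rw [h2, ← nsmul_eq_mul, ← Finset.sum_const]
    refine Finset.sum_congr rfl fun x hx => ?_
    rw [(Finset.mem_filter.1 hx).2]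
  rw [h1]
  simp only [add_mul, one_mul, Finset.sum_add_distrib]
  have h0 : ∑ y : F, ψ (a * y) = 0 := by
    have := AddChar.sum_mulShift a hψ
    simp only [ha, if_false] at this
    simpa [mul_comm] using this
  have h4 := gaussSum_mulShift (cchi F) ψ (Units.mk0 a ha)
  rw [h0, add_zero, ← h4]
  simp only [Units.val_mk0]
  rw [← mul_assoc, cchi_sq F ha, one_mul]
  rfl

lemma sum_quad (F : Type) [Field F] [Fintype F] (hF : ringChar F ≠ 2) (ψ : AddChar F ℂ)
    (hψ : ψ.IsPrimitive) {a : F} (ha : a ≠ 0) (r : F) :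
    ∑ x : F, ψ (a * x ^ 2 + r * x) =
      cchi F a * gaussSum (cchi F) ψ * ψ (-(r ^ 2 / (4 * a))) := by
  have h2 : (2 : F) ≠ 0 := Ring.two_ne_zero hF
  rw [← sum_sq F hF ψ hψ ha, Finset.sum_mul]
  refine Fintype.sum_equiv (Equiv.addRight (r / (2 * a))) _ _ fun x => ?_
  rw [← AddChar.map_add_eq_mul]
  congr 1
  have h4 : (4 : F) = 2 * 2 := by norm_num
  rw [h4]
  simp only [Equiv.coe_addRight]
  field_simp
  ring

lemma g_sq (F : Type) [Field F] [Fintype F] (hF : ringChar F ≠ 2) (ψ : AddChar F ℂ)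
    (hψ : ψ.IsPrimitive) :
    gaussSum (cchi F) ψ ^ 2 = cchi F (-1) * Fintype.card F := by
  refine gaussSum_sq ?_ ?_ hψ
  · intro h
    apply quadraticChar_ne_one hF
    ext a
    have := congrArg (fun c : MulChar F ℂ => c a) h
    simp only [cchi_apply] at this
    rw [MulChar.one_apply_coe] at this ⊢
    exact_mod_cast this
  · exact (quadraticChar_isQuadratic F).comp _

lemma disc_sq (K L : Type) [Field K] [Field L] [Fintype K] [Fintype L] [Algebra K L]
    (v : Module.Basis (Fin (Module.finrank K L)) K L) :
    IsSquare (algebraMap K L (Algebra.traceMatrix K v).det) := by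
  have e : Fin (Module.finrank K L) ≃ (L ≃ₐ[K] L) := by
    refine (Fintype.equivFinOfCardEq ?_).symm
    rw [← Nat.card_eq_fintype_card]
    exact IsGalois.card_aut_eq_finrank K L
  let M : Matrix (Fin (Module.finrank K L)) (Fin (Module.finrank K L)) L :=
    fun i j => e i (v j)
  have : (Algebra.traceMatrix K v).map (algebraMap K L) = M.transpose * M := by
    ext i j
    rw [Matrix.mul_apply]
    simp only [Matrix.map_apply, Algebra.traceMatrix_apply, Algebra.traceForm_apply,
      Matrix.transpose_apply, M]
    rw [trace_eq_sum_automorphisms]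
    rw [← e.sum_comp]
    refine Finset.sum_congr rfl fun x _ => ?_
    rw [map_mul]
    rfl
  rw [RingHom.map_det]
  refine ⟨M.det, ?_⟩
  rw [RingHom.mapMatrix_apply, this, Matrix.det_mul, Matrix.det_transpose]

lemma sq_desc (K L : Type) [Field K] [Field L] [Fintype K] [Fintype L] [Algebra K L]
    (hF : ringChar K ≠ 2) (m : ℕ) (hm : Odd m) (hc : Fintype.card L = Fintype.card K ^ m)
    (d : K) (h : IsSquare (algebraMap K L d)) : IsSquare d := by
  by_cases hd : d = 0
  · subst hd; exact IsSquare.zero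
  have hL : ringChar L ≠ 2 := by
    rwa [← Algebra.ringChar_eq K L]
  rw [FiniteField.isSquare_iff hL (by simpa using hd), ← map_pow] at h
  have h' : d ^ (Fintype.card L / 2) = 1 := by
    apply (algebraMap K L).injective; simpa using h
  rw [FiniteField.isSquare_iff hF hd]
  rcases FiniteField.pow_dichotomy hF hd with h1 | h1
  · exact h1
  exfalso
  have hq : Odd (Fintype.card K) :=
    Nat.odd_iff.2 (FiniteField.odd_card_of_char_ne_two hF)
  obtain ⟨k, hk⟩ := hq
  have hgeom := Nat.geomSum_eq (m := Fintype.card K) (by have := Fintype.one_lt_card (α := K); omega) m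
  have hg : (∑ i ∈ Finset.range m, Fintype.card K ^ i) * (Fintype.card K - 1)
      = Fintype.card K ^ m - 1 := by
    have h1 := Nat.one_le_pow m (Fintype.card K) Fintype.card_pos
    zify [h1, Fintype.card_pos (α := K)]
    exact geom_sum_mul _ _
  have hodd : Odd (∑ i ∈ Finset.range m, Fintype.card K ^ i) := by
    rw [Finset.odd_sum_iff_odd_card_odd]
    rw [Finset.filter_true_of_mem]
    · simpa using hm
    · intro i _; exact Odd.pow ⟨k, hk⟩
  have h3 : Fintype.card L / 2 = (Fintype.card K / 2) * ∑ i ∈ Finset.range m, Fintype.card K ^ i := by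
    have h1 := Nat.one_le_pow m (Fintype.card K) Fintype.card_pos
    rw [hc]
    have : Fintype.card K / 2 = k := by omega
    have h5 : Fintype.card K - 1 = 2 * k := by omega
    rw [h5] at hg
    rw [this]
    have : Fintype.card K ^ m = 2 * (k * ∑ i ∈ Finset.range m, Fintype.card K ^ i) + 1 := by
      have : (∑ i ∈ Finset.range m, Fintype.card K ^ i) * (2 * k) = 2 * (k * ∑ i ∈ Finset.range m, Fintype.card K ^ i) := by ring
      omega
    omega
  rw [h3, pow_mul, h1, hodd.neg_one_pow] at h'
  have h2 : (2 : K) ≠ 0 := Ring.two_ne_zero hF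
  apply h2
  linear_combination -h'

lemma T_eq (K L : Type) [Field K] [Field L] [Fintype K] [Fintype L] [Algebra K L]
    (hF : ringChar K ≠ 2) (m : ℕ) (hm : Odd m) (hc : Fintype.card L = Fintype.card K ^ m)
    (ψ : AddChar K ℂ) (hψ : ψ.IsPrimitive) {u : K} (hu : u ≠ 0) :
    ∑ x : L, ψ (u * Algebra.trace K L (x ^ 2)) = cchi K u * gaussSum (cchi K) ψ ^ m := by
  have hfr : Module.finrank K L = m := by
    have := Module.card_eq_pow_finrank (K := K) (V := L)
    rw [hc] at this
    exact (Nat.pow_right_injective (Fintype.one_lt_card (α := K)) this).symm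
  have : Invertible (2 : K) := invertibleOfNonzero (Ring.two_ne_zero hF)
  obtain ⟨v, hv⟩ := LinearMap.BilinForm.exists_orthogonal_basis
    (B := Algebra.traceForm K L) ⟨fun x y => (Algebra.traceForm_isSymm K (S := L)).eq x y⟩
  have hdiag : Algebra.traceMatrix K v
      = Matrix.diagonal fun i => Algebra.trace K L (v i * v i) := by
    ext i j
    by_cases hij : i = j
    · subst hij; simp [Algebra.traceMatrix_apply, Algebra.traceForm_apply]
    · rw [Matrix.diagonal_apply_ne _ hij, Algebra.traceMatrix_apply]
      exact hv hij
  have hdet : (Algebra.traceMatrix K v).det = ∏ i, Algebra.trace K L (v i * v i) := by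
    rw [hdiag, Matrix.det_diagonal]
  have hne : (Algebra.traceMatrix K v).det ≠ 0 := by
    rw [Algebra.traceMatrix_of_basis]
    convert det_traceForm_ne_zero v
  have hsq := sq_desc K L hF m hm hc _ (disc_sq K L v)
  have hchi : cchi K (∏ i, Algebra.trace K L (v i * v i)) = 1 := by
    rw [← hdet, cchi_apply, (quadraticChar_one_iff_isSquare hne).2 hsq]; simp
  have hw : ∀ i, Algebra.trace K L (v i * v i) ≠ 0 := by
    intro i hi
    apply hne; rw [hdet]; exact Finset.prod_eq_zero (Finset.mem_univ i) hi
  have hQ : ∀ c : Fin (Module.finrank K L) → K,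
      Algebra.trace K L ((v.equivFun.symm c) ^ 2)
        = ∑ i, Algebra.trace K L (v i * v i) * c i ^ 2 := by
    intro c
    rw [Module.Basis.equivFun_symm_apply, sq, Finset.sum_mul_sum, map_sum]
    refine Finset.sum_congr rfl fun i _ => ?_
    rw [map_sum, Finset.sum_eq_single i]
    · rw [smul_mul_smul_comm, map_smul, smul_eq_mul]; ring
    · intro j _ hij
      rw [smul_mul_smul_comm, map_smul]
      have := hv hij.symm
      change Algebra.trace K L (v i * v j) = 0 at this
      rw [this, smul_zero]
    · simp
  rw [← v.equivFun.symm.toEquiv.sum_comp]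
  have hterm : ∀ c : Fin (Module.finrank K L) → K,
      ψ (u * Algebra.trace K L ((v.equivFun.symm c) ^ 2))
        = ∏ i, ψ (u * Algebra.trace K L (v i * v i) * c i ^ 2) := by
    intro c
    rw [hQ, Finset.mul_sum]
    have := map_prod ψ.toMonoidHom
      (fun i => Multiplicative.ofAdd (u * (Algebra.trace K L (v i * v i) * c i ^ 2))) Finset.univ
    rw [← ofAdd_sum] at this
    simp only [mul_assoc]
    exact this
  calc _ = ∑ c : Fin (Module.finrank K L) → K, ∏ i, ψ (u * Algebra.trace K L (v i * v i) * c i ^ 2) :=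
        Finset.sum_congr rfl fun c _ => hterm c
    _ = ∏ i, ∑ t : K, ψ (u * Algebra.trace K L (v i * v i) * t ^ 2) := by
        rw [Finset.prod_univ_sum, Fintype.piFinset_univ]
    _ = ∏ i, (cchi K u * gaussSum (cchi K) ψ * cchi K (Algebra.trace K L (v i * v i))) := by
        refine Finset.prod_congr rfl fun i _ => ?_
        rw [sum_sq K hF ψ hψ (mul_ne_zero hu (hw i)), map_mul]; ring
    _ = _ := by
        rw [Finset.prod_mul_distrib, ← map_prod, hchi, Finset.prod_const, Finset.card_univ,
          Fintype.card_fin, hfr, mul_one, mul_pow]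
        congr 1
        obtain ⟨k, rfl⟩ := hm
        rw [pow_succ, pow_mul, sq, cchi_sq K hu, one_pow, one_mul]

lemma S_eq (K L : Type) [Field K] [Field L] [Fintype K] [Fintype L] [Algebra K L]
    (hF : ringChar K ≠ 2) (m : ℕ) (hm : Odd m) (hc : Fintype.card L = Fintype.card K ^ m)
    (ψ : AddChar K ℂ) (hψ : ψ.IsPrimitive) {u : K} (hu : u ≠ 0) (b : L) (v : K) :
    ∑ x : L, ψ (u * Algebra.trace K L (x ^ 2) + v * Algebra.trace K L (b * x))
      = cchi K u * gaussSum (cchi K) ψ ^ m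
        * ψ (-(Algebra.trace K L (b ^ 2) / (4 * u)) * v ^ 2) := by
  have h2 : (2 : K) ≠ 0 := Ring.two_ne_zero hF
  rw [← T_eq K L hF m hm hc ψ hψ hu, Finset.sum_mul]
  refine Fintype.sum_equiv (Equiv.addRight ((v / (2 * u)) • b)) _ _ fun x => ?_
  rw [← AddChar.map_add_eq_mul]
  congr 1
  have h4 : (4 : K) = 2 * 2 := by norm_num
  rw [h4]
  simp only [Equiv.coe_addRight]
  have : (x + (v / (2 * u)) • b) ^ 2
      = x ^ 2 + (v / u) • (b * x) + (v / (2 * u)) ^ 2 • b ^ 2 := by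
    have : v / u = 2 * (v / (2 * u)) := by field_simp
    rw [this]
    simp only [Algebra.smul_def, map_mul, map_pow, map_ofNat]
    ring
  rw [this, map_add, map_add, map_smul, map_smul, smul_eq_mul, smul_eq_mul]
  field_simp
  ring

lemma lin_sum (K L : Type) [Field K] [Field L] [Fintype K] [Fintype L] [Algebra K L]
    (ψ : AddChar K ℂ) (hψ : ψ.IsPrimitive) {b : L} (hb : b ≠ 0) {v : K} (hv : v ≠ 0) :
    ∑ x : L, ψ (v * Algebra.trace K L (b * x)) = 0 := by
  obtain ⟨t, ht⟩ := AddChar.ne_one_iff.1 (hψ hv)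
  rw [AddChar.mulShift_apply] at ht
  obtain ⟨z, hz⟩ := Algebra.trace_surjective K L t
  have h : ∑ x : L, ψ (v * Algebra.trace K L (b * x))
      = ψ (v * t) * ∑ x : L, ψ (v * Algebra.trace K L (b * x)) := by
    rw [Finset.mul_sum]
    refine (Fintype.sum_equiv (Equiv.addRight (z / b)) _ _ fun x => ?_).symm
    rw [← AddChar.map_add_eq_mul]
    congr 1
    simp only [Equiv.coe_addRight]
    rw [mul_add, mul_div_cancel₀ _ hb, map_add, hz]
    ring
  have h' : (1 - ψ (v * t)) * ∑ x : L, ψ (v * Algebra.trace K L (b * x)) = 0 := by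
    linear_combination h
  rcases mul_eq_zero.1 h' with h1 | h1
  · exact absurd (sub_eq_zero.1 h1).symm ht
  · exact h1

lemma count_sum (K L : Type) [Field K] [Field L] [Fintype K] [Fintype L] [Algebra K L]
    (ψ : AddChar K ℂ) (hψ : ψ.IsPrimitive) (b : L) (s : K) :
    (Nat.card {x : L // Algebra.trace K L (b * x) = s ∧ Algebra.trace K L (x ^ 2) = 0} : ℂ)
      * (Fintype.card K : ℂ) ^ 2
    = ∑ u : K, ∑ v : K, ψ (v * -s) *
        ∑ x : L, ψ (u * Algebra.trace K L (x ^ 2) + v * Algebra.trace K L (b * x)) := by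
  have h1 : ∀ x : L, (∑ u : K, ψ (u * Algebra.trace K L (x ^ 2))) *
      (∑ v : K, ψ (v * (Algebra.trace K L (b * x) - s)))
      = if Algebra.trace K L (b * x) = s ∧ Algebra.trace K L (x ^ 2) = 0 then
        (Fintype.card K : ℂ) ^ 2 else 0 := by
    intro x
    rw [AddChar.sum_mulShift _ hψ, AddChar.sum_mulShift _ hψ]
    simp only [sub_eq_zero]
    by_cases h1 : Algebra.trace K L (b * x) = s <;>
      by_cases h2 : Algebra.trace K L (x ^ 2) = 0 <;> simp [h1, h2, sq]
  have h2 : (Nat.card {x : L // Algebra.trace K L (b * x) = s ∧ Algebra.trace K L (x ^ 2) = 0} : ℂ)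
      * (Fintype.card K : ℂ) ^ 2 = ∑ x : L, (∑ u : K, ψ (u * Algebra.trace K L (x ^ 2))) *
      (∑ v : K, ψ (v * (Algebra.trace K L (b * x) - s))) := by
    simp only [h1]
    rw [← Finset.sum_filter, Finset.sum_const, nsmul_eq_mul, Nat.card_eq_fintype_card,
      Fintype.card_subtype]
  rw [h2]
  simp only [Finset.sum_mul_sum]
  rw [Finset.sum_comm]
  refine Finset.sum_congr rfl fun u _ => ?_
  rw [Finset.sum_comm]
  refine Finset.sum_congr rfl fun v _ => ?_
  rw [Finset.mul_sum]
  refine Finset.sum_congr rfl fun x _ => ?_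
  rw [← AddChar.map_add_eq_mul, ← AddChar.map_add_eq_mul]
  congr 1
  ring

lemma u_zero (K L : Type) [Field K] [Field L] [Fintype K] [Fintype L] [Algebra K L]
    (ψ : AddChar K ℂ) (hψ : ψ.IsPrimitive) {b : L} (hb : b ≠ 0) (s : K) :
    ∑ v : K, ψ (v * -s) *
        ∑ x : L, ψ (0 * Algebra.trace K L (x ^ 2) + v * Algebra.trace K L (b * x))
      = Fintype.card L := by
  rw [Finset.sum_eq_single 0]
  · simp
  · intro v _ hv
    simp only [zero_mul, zero_add]
    rw [lin_sum K L ψ hψ hb hv, mul_zero]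
  · simp

lemma u_ne (K L : Type) [Field K] [Field L] [Fintype K] [Fintype L] [Algebra K L]
    (hF : ringChar K ≠ 2) (m : ℕ) (hm : Odd m) (hc : Fintype.card L = Fintype.card K ^ m)
    (ψ : AddChar K ℂ) (hψ : ψ.IsPrimitive) (b : L) {s : K} (hs : s ≠ 0) {u : K} (hu : u ≠ 0) :
    ∑ v : K, ψ (v * -s) *
        ∑ x : L, ψ (u * Algebra.trace K L (x ^ 2) + v * Algebra.trace K L (b * x))
      = if Algebra.trace K L (b ^ 2) = 0 then 0 else
        cchi K (-Algebra.trace K L (b ^ 2)) * gaussSum (cchi K) ψ ^ (m + 1)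
          * ψ (u * (s ^ 2 / Algebra.trace K L (b ^ 2))) := by
  simp only [S_eq K L hF m hm hc ψ hψ hu b]
  have h2 : (2 : K) ≠ 0 := Ring.two_ne_zero hF
  have h4 : (4 : K) = 2 ^ 2 := by norm_num
  have h4' : (4 : K) ≠ 0 := by rw [h4]; exact pow_ne_zero _ h2
  split_ifs with h
  · rw [h]
    simp only [zero_div, neg_zero, zero_mul, AddChar.map_zero_eq_one, mul_one]
    rw [← Finset.sum_mul, AddChar.sum_mulShift _ hψ]
    simp [hs]
  · generalize Algebra.trace K L (b ^ 2) = c at h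
    have ha : -(c / (4 * u)) ≠ 0 := neg_ne_zero.2 (div_ne_zero h (mul_ne_zero h4' hu))
    have h5 := sum_quad K hF ψ hψ ha (-s)
    have h6 : cchi K u * cchi K (-(c / (4 * u))) = cchi K (-c) := by
      rw [← map_mul]
      have : u * -(c / (4 * u)) = (-c) * (2⁻¹ * 2⁻¹) := by
        rw [h4]; field_simp
      rw [this, map_mul, map_mul, cchi_sq K (inv_ne_zero h2), mul_one]
    have h7 : -((-s) ^ 2 / (4 * -(c / (4 * u)))) = u * (s ^ 2 / c) := by
      field_simp
    rw [h7] at h5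
    calc _ = ∑ v : K, cchi K u * gaussSum (cchi K) ψ ^ m * ψ (-(c / (4 * u)) * v ^ 2 + -s * v) := by
          refine Finset.sum_congr rfl fun v _ => ?_
          rw [AddChar.map_add_eq_mul, mul_comm v (-s)]; ring
      _ = _ := by
          rw [← Finset.mul_sum, h5, ← h6]; ring

lemma count_val (K L : Type) [Field K] [Field L] [Fintype K] [Fintype L] [Algebra K L]
    (hF : ringChar K ≠ 2) (m : ℕ) (hm : Odd m) (hc : Fintype.card L = Fintype.card K ^ m)
    {b : L} (hb : b ≠ 0) {s : K} (hs : s ≠ 0) :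
    (Nat.card {x : L // Algebra.trace K L (b * x) = s ∧ Algebra.trace K L (x ^ 2) = 0} : ℤ)
      * (Fintype.card K : ℤ) ^ 2
    = (Fintype.card K : ℤ) ^ m - if Algebra.trace K L (b ^ 2) = 0 then 0 else
        quadraticChar K (-Algebra.trace K L (b ^ 2)) *
          (quadraticChar K (-1) * Fintype.card K) ^ ((m + 1) / 2) := by
  obtain ⟨ψ, hψ⟩ : ∃ ψ : AddChar K ℂ, ψ.IsPrimitive :=
    ⟨_, AddChar.FiniteField.primitiveChar_to_Complex_isPrimitive K⟩
  have hg : gaussSum (cchi K) ψ ^ (m + 1)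
      = (cchi K (-1) * Fintype.card K) ^ ((m + 1) / 2) := by
    rw [← g_sq K hF ψ hψ, ← pow_mul]
    congr 1
    obtain ⟨k, rfl⟩ := hm
    omega
  have h := count_sum K L ψ hψ b s
  rw [← Finset.add_sum_erase _ _ (Finset.mem_univ 0), u_zero K L ψ hψ hb,
    Finset.sum_congr rfl (fun u hu =>
      u_ne K L hF m hm hc ψ hψ b hs (Finset.ne_of_mem_erase hu)), hc, hg] at h
  apply Int.cast_injective (α := ℂ)
  by_cases hcz : Algebra.trace K L (b ^ 2) = 0
  · simp only [hcz, if_true, Finset.sum_const_zero] at h ⊢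
    push_cast at h ⊢
    rw [h]; ring
  · simp only [hcz, if_false] at h ⊢
    have h8 : ∑ u ∈ Finset.univ.erase (0 : K), ψ (u * (s ^ 2 / Algebra.trace K L (b ^ 2))) = -1 := by
      have h9 := AddChar.sum_mulShift (s ^ 2 / Algebra.trace K L (b ^ 2)) hψ
      rw [← Finset.add_sum_erase _ _ (Finset.mem_univ 0),
        if_neg (div_ne_zero (pow_ne_zero 2 hs) hcz)] at h9
      simp only [zero_mul, AddChar.map_zero_eq_one, Nat.cast_zero] at h9
      linear_combination h9
    rw [← Finset.mul_sum, h8] at h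
    simp only [cchi_apply] at h
    push_cast at h ⊢
    rw [h]; ring

lemma chi_neg_one (K : Type) [Field K] [Fintype K] (hF : ringChar K ≠ 2) (p e : ℕ)
    (hodd : Odd p) (hc : Fintype.card K = p ^ e) :
    quadraticChar K (-1) = (-1) ^ (e * ((p - 1) / 2)) := by
  rw [quadraticChar_neg_one hF, hc, Nat.cast_pow, map_pow]
  rw [ZMod.χ₄_eq_neg_one_pow (Nat.odd_iff.1 hodd), ← pow_mul, mul_comm]
  congr 2
  obtain ⟨k, rfl⟩ := hodd
  omega

theorem stmt11 (p e q m l : ℕ) (hp : p.Prime) (hodd : Odd p) (he : 0 < e)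
    (hq : q = p ^ e) (hmodd : Odd m) (hm3 : 3 ≤ m)
    (hl : l = e * (p - 1) * (m + 3) / 4)
    (Fq Fm : Type) [Field Fq] [Field Fm] [Fintype Fq] [Fintype Fm] [Algebra Fq Fm]
    (hcq : Fintype.card Fq = q) (hcm : Fintype.card Fm = q ^ m)
    (s : Fq) (hs : s ≠ 0) (b : Fm) (hb : b ≠ 0)
    (Ns : ℕ)
    (hNs : Ns = Nat.card {x : Fm //
      Algebra.trace Fq Fm (b * x) = s ∧ Algebra.trace Fq Fm (x ^ 2) = 0}) :
    (Algebra.trace Fq Fm (b ^ 2) = 0 → Ns = q ^ (m - 2)) ∧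
    (Algebra.trace Fq Fm (b ^ 2) ≠ 0 →
      (Ns : ℤ) = (q : ℤ) ^ (m - 2)
        - (-1) ^ l * qchar Fq (Algebra.trace Fq Fm (b ^ 2)) * (q : ℤ) ^ ((m - 3) / 2)) := by
  have hF : ringChar Fq ≠ 2 := by
    intro h2
    have h := FiniteField.even_card_of_char_two h2
    rw [hcq, hq] at h
    have := Nat.odd_iff.1 (hodd.pow (n := e))
    omega
  have hqpos : 0 < q := by rw [← hcq]; exact Fintype.card_pos
  have hq0 : (q : ℤ) ^ 2 ≠ 0 := by positivity
  have hmain := count_val Fq Fm hF m hmodd (by rw [hcm, hcq]) hb hs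
  rw [← hNs, hcq] at hmain
  obtain ⟨k, rfl⟩ : ∃ k, m = 2 * k + 3 := by
    obtain ⟨k, rfl⟩ := hmodd
    exact ⟨k - 1, by omega⟩
  have e1 : 2 * k + 3 - 2 = 2 * k + 1 := by omega
  have e2 : (2 * k + 3 - 3) / 2 = k := by omega
  have e3 : (2 * k + 3 + 1) / 2 = k + 2 := by omega
  rw [e3] at hmain
  rw [e1, e2]
  constructor
  · intro hc
    rw [if_pos hc] at hmain
    have : (Ns : ℤ) = (q : ℤ) ^ (2 * k + 1) := by
      apply mul_right_cancel₀ hq0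
      rw [hmain]; ring
    exact_mod_cast this
  · intro hc
    rw [if_neg hc] at hmain
    have hqc : qchar Fq (Algebra.trace Fq Fm (b ^ 2))
        = quadraticChar Fq (Algebra.trace Fq Fm (b ^ 2)) := by
      rw [qchar, if_neg hc]
      split_ifs with h
      · exact ((quadraticChar_one_iff_isSquare hc).2 h).symm
      · exact (quadraticChar_neg_one_iff_not_isSquare.2 h).symm
    have hl' : l = e * ((p - 1) / 2) * (k + 3) := by
      rw [hl]
      obtain ⟨j, rfl⟩ := hodd
      have : (2 * j + 1 - 1) = 2 * j := by omega
      rw [this]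
      have : 2 * j / 2 = j := by omega
      rw [this]
      have : e * (2 * j) * (2 * k + 3 + 3) = 4 * (e * j * (k + 3)) := by ring
      rw [this]; omega
    have hsign : ((-1 : ℤ)) ^ l = quadraticChar Fq (-1) ^ (k + 3) := by
      rw [chi_neg_one Fq hF p e hodd (by rw [hcq, hq]), hl', ← pow_mul]
    rw [hsign, hqc]
    apply mul_right_cancel₀ hq0
    rw [hmain, neg_eq_neg_one_mul, map_mul]
    ring
end
end

section
/- Let q = p^e with p an odd prime and e a positive integer, let m ≥ 3 be odd, and set l = e(p−1)(m+3)/4. Then the augmented code \overline{C_D} has length q^{m−1}, dimension m + 1, and minimum distance (q−1)q^{(m−3)/2}(q^{(m−1)/2} − 1), and the multiset of Hamming weights of its codewords consists of: weight 0 with multiplicity 1; weight q^{m−1} with multiplicity q − 1; weight (q−1)q^{m−2} with multiplicity q(q^{m−1} − 1); weight (q−1)q^{m−2} + (−1)^l q^{(m−3)/2} with multiplicity (q−1)²(q^{m−1} + (−1)^l q^{(m−1)/2})/2; weight (q−1)q^{m−2} − (−1)^l q^{(m−3)/2} with multiplicity (q−1)²(q^{m−1} + (−1)^{l+1} q^{(m−1)/2})/2;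 weight (q−1)q^{m−2} − (−1)^l (q−1) q^{(m−3)/2} with multiplicity (q−1)(q^{m−1} + (−1)^l q^{(m−1)/2})/2; and weight (q−1)q^{m−2} + (−1)^l (q−1) q^{(m−3)/2} with multiplicity (q−1)(q^{m−1} + (−1)^{l+1} q^{(m−1)/2})/2. Moreover, if m > 3 then \overline{C_D} is self-orthogonal (\overline{C_D} ⊆ \overline{C_D}^⊥), and the dual code \overline{C_D}^⊥ has length q^{m−1}, dimension q^{m−1} − m − 1 and minimum distance 3. -/
open scoped Classical

noncomputable section

/-- The augmented code `\overline{C_D}` of the defining set `D = {x : K // P x}`: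
codewords are `(Tr_{K/F}(b d) + c)_{d ∈ D}` for `b ∈ K`, `c ∈ F`. -/
def augCode (F K : Type*) [Field F] [Field K] [Algebra F K] (P : K → Prop) :
    Set ({x : K // P x} → F) :=
  {w | ∃ b : K, ∃ c : F, ∀ d : {x : K // P x}, w d = Algebra.trace F K (b * d.1) + c}

set_option linter.unusedSectionVars false

section GaussPart

open Finset AddChar

/-- complex valued quadratic character -/
def qch (F : Type*) [Field F] [Fintype F] : MulChar F ℂ :=
  (quadraticChar F).ringHomComp (Int.castRingHom ℂ)

variable {F : Type*} [Field F] [Fintype F]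

lemma qch_apply (a : F) : qch F a = ((quadraticChar F a : ℤ) : ℂ) := rfl

@[simp] lemma qch_zero : qch F 0 = 0 := by
  rw [qch_apply]; simp

lemma qch_sq {a : F} (ha : a ≠ 0) : qch F a * qch F a = 1 := by
  rw [qch_apply]
  have := quadraticChar_sq_one ha
  rw [sq] at this
  exact_mod_cast this

lemma qch_inv {a : F} (ha : a ≠ 0) : qch F a⁻¹ = qch F a := by
  have h1 : qch F a * qch F a⁻¹ = 1 := by
    rw [← map_mul, mul_inv_cancel₀ ha, map_one]
  have h2 := qch_sq ha
  have h3 : qch F a ≠ 0 := by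
    intro h; rw [h] at h2; simp at h2
  exact mul_left_cancel₀ h3 (h1.trans h2.symm)

lemma qch_sum (hF : ringChar F ≠ 2) : ∑ a : F, qch F a = 0 := by
  have := quadraticChar_sum_zero (F := F) hF
  simp only [qch_apply]
  exact_mod_cast this

lemma qch_ne_one (hF : ringChar F ≠ 2) : qch F ≠ 1 := by
  intro h
  obtain ⟨a, ha⟩ := quadraticChar_exists_neg_one' (F := F) hF
  have := qch_apply (a : F)
  rw [h, ha, MulChar.one_apply_coe] at this
  norm_num at this

lemma qch_isQuadratic : (qch F).IsQuadratic := by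
  intro a
  rw [qch_apply]
  rcases quadraticChar_isQuadratic (F := F) a with h | h | h <;> simp [h]

lemma two_ne (hF : ringChar F ≠ 2) : (2 : F) ≠ 0 := Ring.two_ne_zero hF

/-- shifted Gauss sum -/
lemma gauss_shift (ψ : AddChar F ℂ) {a : F} (ha : a ≠ 0) :
    ∑ x, qch F x * ψ (a * x) = qch F a * gaussSum (qch F) ψ := by
  have h := gaussSum_mulShift (qch F) ψ (Units.mk0 a ha)
  rw [← h, ← mul_assoc]
  simp only [Units.val_mk0]
  rw [qch_sq ha, one_mul, gaussSum]
  rfl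

lemma sum_char {ψ : AddChar F ℂ} (hψ : ψ.IsPrimitive) (b : F) :
    ∑ x : F, ψ (b * x) = if b = 0 then (Fintype.card F : ℂ) else 0 := by
  have h := sum_mulShift b hψ
  simp only [mul_comm b, h]
  split_ifs <;> simp

/-- quadratic exponential sum -/
lemma quad_sum (hF : ringChar F ≠ 2) {ψ : AddChar F ℂ} (hψ : ψ.IsPrimitive) {a : F} (ha : a ≠ 0) :
    ∑ x, ψ (a * x ^ 2) = qch F a * gaussSum (qch F) ψ := by
  rw [← gauss_shift ψ ha]
  have h1 : ∑ x : F, ψ (a * x ^ 2) = ∑ t : F, ∑ x ∈ univ.filter (fun x : F => x ^ 2 = t), ψ (a * t) := by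
    rw [← Finset.sum_fiberwise (s := univ) (g := fun x : F => x ^ 2)]
    refine Finset.sum_congr rfl fun t _ => Finset.sum_congr rfl fun x hx => ?_
    rw [(Finset.mem_filter.1 hx).2]
  have h2 : ∀ t : F, ((univ.filter (fun x : F => x ^ 2 = t)).card : ℂ) = qch F t + 1 := by
    intro t
    have := quadraticChar_card_sqrts hF t
    rw [qch_apply]
    have h3 : (univ.filter (fun x : F => x ^ 2 = t)) = {x : F | x ^ 2 = t}.toFinset := by
      ext; simp
    rw [h3]
    exact_mod_cast this
  rw [h1]
  simp only [Finset.sum_const, nsmul_eq_mul, h2, add_mul, one_mul, Finset.sum_add_distrib]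
  rw [sum_char hψ, if_neg ha, add_zero]

/-- complete the square -/
lemma quad_sum_lin (hF : ringChar F ≠ 2) {ψ : AddChar F ℂ} (hψ : ψ.IsPrimitive) {a : F} (ha : a ≠ 0)
    (b : F) :
    ∑ x, ψ (a * x ^ 2 + b * x) = ψ (-(b ^ 2) * (4 * a)⁻¹) * (qch F a * gaussSum (qch F) ψ) := by
  have h2 := two_ne hF
  have h4 : (4 : F) ≠ 0 := by
    have : (4 : F) = 2 * 2 := by norm_num
    rw [this]; exact mul_ne_zero h2 h2
  rw [← quad_sum hF hψ ha, Finset.mul_sum, ← Equiv.sum_comp (Equiv.subRight (b * (2 * a)⁻¹))]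
  refine Finset.sum_congr rfl fun x _ => ?_
  rw [← map_add_eq_mul]
  congr 1
  simp only [Equiv.subRight_apply]
  field_simp
  ring

end GaussPart

section ExtPart

open Finset AddChar

variable {F K : Type} [Field F] [Fintype F] [Field K] [Fintype K] [Algebra F K]

lemma ext_char : ∃ (ψ : AddChar F ℂ) (Ψ : AddChar K ℂ), ψ.IsPrimitive ∧ Ψ.IsPrimitive ∧
    ∀ x, Ψ x = ψ (Algebra.trace F K x) := by
  obtain ⟨ψ, hψ⟩ := (AddChar.exists_apply_ne_zero (a := (1 : F))).2 one_ne_zero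
  have h1 : ψ ≠ 1 := fun h => hψ (by rw [h]; rfl)
  refine ⟨ψ, ψ.compAddMonoidHom (Algebra.trace F K).toAddMonoidHom, IsPrimitive.of_ne_one h1,
    IsPrimitive.of_ne_one ?_, fun x => rfl⟩
  intro h
  obtain ⟨x, hx⟩ := Algebra.trace_surjective F K 1
  apply hψ
  have h2 : (ψ.compAddMonoidHom (Algebra.trace F K).toAddMonoidHom) x = 1 := by rw [h]; rfl
  rw [← hx]
  exact h2

lemma qch_ext (hF : ringChar F ≠ 2) (hK : ringChar K ≠ 2) {m : ℕ} (hm : Odd m)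
    (hc : Fintype.card K = Fintype.card F ^ m) (y : F) :
    qch K (algebraMap F K y) = qch F y := by
  rw [qch_apply, qch_apply]
  congr 1
  by_cases hy : y = 0
  · simp [hy]
  have hy' : algebraMap F K y ≠ 0 := by simpa using hy
  have e1 := quadraticChar_eq_pow_of_char_ne_two' hF y
  have e2 := quadraticChar_eq_pow_of_char_ne_two' hK (algebraMap F K y)
  have hodd : Odd (Fintype.card F) := FiniteField.odd_card_of_char_ne_two hF |> Nat.odd_iff.2
  obtain ⟨r, hr⟩ := hodd
  have hdiv : Fintype.card F / 2 = r := by omega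
  -- (q^m)/2 = r * odd
  have key : ∃ S, Odd S ∧ Fintype.card K / 2 = r * S := by
    refine ⟨∑ i ∈ range m, Fintype.card F ^ i, ?_, ?_⟩
    · rw [Finset.odd_sum_iff_odd_card_odd]
      have : filter (fun i => Odd (Fintype.card F ^ i)) (range m) = range m := by
        apply Finset.filter_true_of_mem
        intro i _
        exact Odd.pow ⟨r, hr⟩
      rw [this, card_range]; exact hm
    · have h := Nat.geomSum_eq (m := Fintype.card F) (by have := Fintype.one_lt_card (α := F); omega) m
      have h2 : (∑ i ∈ range m, Fintype.card F ^ i) * (Fintype.card F - 1) + 1 = Fintype.card F ^ m := by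
        have := geom_sum_mul_add (R := ℕ) (Fintype.card F - 1) m
        have h3 : Fintype.card F - 1 + 1 = Fintype.card F := by omega
        rw [h3] at this
        exact this
      have h4 : Fintype.card F - 1 = 2 * r := by omega
      rw [h4] at h2
      rw [hc, ← h2]
      have : (∑ i ∈ range m, Fintype.card F ^ i) * (2 * r) = 2 * (r * ∑ i ∈ range m, Fintype.card F ^ i) := by ring
      omega
  obtain ⟨S, hS, hS2⟩ := key
  have h3 : ((quadraticChar K (algebraMap F K y) : ℤ) : K) = ((quadraticChar F y : ℤ) : K) ^ S := by
    rw [e2, hS2, pow_mul, ← hdiv, ← map_pow, ← e1]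
    simp
  have h2K : (2 : K) ≠ 0 := two_ne hK
  have hne : (1 : K) ≠ -1 := by
    intro h; apply h2K; linear_combination h
  rcases quadraticChar_dichotomy hy with h | h <;> rcases quadraticChar_dichotomy hy' with h' | h' <;>
    rw [h, h'] at h3 ⊢
  · simp at h3; exact absurd h3.symm hne
  · rw [Int.cast_neg, Int.cast_one, hS.neg_one_pow] at h3; exact absurd h3 hne

lemma sum_erase0 (f : F → ℂ) : ∑ y, f y = f 0 + ∑ y ∈ univ.erase (0 : F), f y := by
  rw [Finset.add_sum_erase _ _ (mem_univ _)]

theorem counts (hF : ringChar F ≠ 2) (hK : ringChar K ≠ 2) {k : ℕ} {q : ℕ}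
    (hq : Fintype.card F = q) (hc : Fintype.card K = q ^ (2 * k + 3)) :
    ∃ κ : K → ℤ, (∀ b, κ b = 0 ↔ Algebra.trace F K (b ^ 2) = 0) ∧
      (∀ b, κ b = 0 ∨ κ b = 1 ∨ κ b = -1) ∧
      ((univ.filter fun x : K => Algebra.trace F K (x ^ 2) = 0).card = q ^ (2 * k + 2)) ∧
      (∀ b ≠ 0, ((univ.filter fun x : K => Algebra.trace F K (x ^ 2) = 0 ∧
          Algebra.trace F K (b * x) = 0).card : ℤ) = q ^ (2 * k + 1) + κ b * (q - 1) * q ^ k) ∧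
      ∑ b, κ b = (q - 1) * q ^ (k + 1) := by
  obtain ⟨ψ, Ψ, hψ, hΨ, hT⟩ := ext_char (F := F) (K := K)
  set T := Algebra.trace F K with hTdef
  have hq0 : (q : ℂ) ≠ 0 := by
    rw [← hq]; exact_mod_cast Fintype.card_ne_zero
  set G := gaussSum (qch K) Ψ with hG
  set g := gaussSum (qch F) ψ with hg
  have hGs : G ^ 2 = qch F (-1) * q ^ (2 * k + 3) := by
    have := gaussSum_sq (qch_ne_one hK) qch_isQuadratic hΨ
    rw [hG, this, hc, ← qch_ext hF hK (m := 2 * k + 3) ⟨k + 1, by ring⟩ (by rw [hc, hq])]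
    simp
  have hgs : g ^ 2 = qch F (-1) * q := by
    have := gaussSum_sq (qch_ne_one hF) qch_isQuadratic hψ
    rw [hg, this, hq]
  have hm1 : qch F (-1) * qch F (-1) = 1 := qch_sq (by simp)
  have hext : ∀ y : F, qch K (algebraMap F K y) = qch F y := 
    qch_ext hF hK (m := 2 * k + 3) ⟨k + 1, by ring⟩ (by rw [hc, hq])
  have hsmul : ∀ (y : F) (x : K), ψ (y * T x) = Ψ (algebraMap F K y * x) := by
    intro y x
    rw [hT, ← Algebra.smul_def, map_smul, smul_eq_mul]
  obtain ⟨s, hs, hGg⟩ : ∃ s : ℤ, (s = 1 ∨ s = -1) ∧ G * g = s * q ^ (k + 2) := by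
    have : (G * g) ^ 2 = ((q : ℂ) ^ (k + 2)) ^ 2 := by
      rw [mul_pow, hGs, hgs]
      linear_combination (q : ℂ) ^ (2 * k + 4) * hm1
    rcases sq_eq_sq_iff_eq_or_eq_neg.1 this with h | h
    · exact ⟨1, Or.inl rfl, by rw [h]; simp⟩
    · exact ⟨-1, Or.inr rfl, by rw [h]; simp⟩
  have hsq : (q : ℂ) = Fintype.card F := by rw [hq]
  have hA : ∀ y : F, y ≠ 0 → ∑ x : K, ψ (y * T (x ^ 2)) = qch F y * G := by
    intro y hy
    simp only [hsmul]
    rw [quad_sum hK hΨ (by simpa using hy), hext]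
  have hindF : ∀ a : F, (if a = 0 then (q : ℂ) else 0) = ∑ y : F, ψ (y * a) := by
    intro a
    rw [hsq, ← sum_char hψ a]
    simp only [mul_comm]
  have hsum0 : ∑ y ∈ univ.erase (0 : F), qch F y = 0 := by
    have := qch_sum (F := F) hF
    rw [sum_erase0, qch_zero, zero_add] at this
    exact this
  have hcard0 : ((univ.erase (0 : F)).card : ℂ) = q - 1 := by
    rw [Finset.card_erase_of_mem (mem_univ _), Finset.card_univ, hq, Nat.cast_sub, Nat.cast_one]
    rw [← hq]; exact Fintype.card_pos
  refine ⟨fun b => s * quadraticChar F (- T (b ^ 2)), ?_, ?_, ?_, ?_, ?_⟩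
  · intro b
    have : s ≠ 0 := by rcases hs with h | h <;> simp [h]
    rw [mul_eq_zero, quadraticChar_eq_zero_iff, neg_eq_zero]
    simp [this]
  · intro b
    rcases hs with h | h <;> rcases quadraticChar_isQuadratic (F := F) (- T (b ^ 2)) with h' | h' | h' <;>
      simp [h, h']
  · have h1 : (q : ℂ) * ((univ.filter fun x : K => T (x ^ 2) = 0).card : ℂ) = q ^ (2 * k + 3) := by
      calc (q : ℂ) * ((univ.filter fun x : K => T (x ^ 2) = 0).card : ℂ)
          = ∑ x : K, (if T (x ^ 2) = 0 then (q : ℂ) else 0) := by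
            rw [← Finset.sum_filter, Finset.sum_const, nsmul_eq_mul, mul_comm]
        _ = ∑ y : F, ∑ x : K, ψ (y * T (x ^ 2)) := by
            rw [Finset.sum_comm]; simp only [hindF]
        _ = _ := by
            rw [sum_erase0, Finset.sum_congr rfl (fun y hy => hA y (Finset.ne_of_mem_erase hy)),
              ← Finset.sum_mul, hsum0]
            simp [hc]
    have h2 : q * (univ.filter fun x : K => T (x ^ 2) = 0).card = q * q ^ (2 * k + 2) := by
      have : (q : ℂ) ^ (2 * k + 3) = q * q ^ (2 * k + 2) := by ring
      rw [this] at h1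
      exact_mod_cast h1
    exact Nat.eq_of_mul_eq_mul_left (by rw [← hq]; exact Fintype.card_pos) h2
  · intro b hb
    have h1 : (q : ℂ) * q * ((univ.filter fun x : K => T (x ^ 2) = 0 ∧ T (b * x) = 0).card : ℂ)
        = q ^ (2 * k + 3) + qch F (- T (b ^ 2)) * (q - 1) * (G * g) := by
      calc (q : ℂ) * q * ((univ.filter fun x : K => T (x ^ 2) = 0 ∧ T (b * x) = 0).card : ℂ)
          = ∑ x : K, (if T (x ^ 2) = 0 then (q : ℂ) else 0) * (if T (b * x) = 0 then (q : ℂ) else 0) := by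
            simp only [← ite_and, ite_mul, mul_ite, mul_zero, zero_mul]
            rw [mul_comm, ← nsmul_eq_mul, ← Finset.sum_const, Finset.sum_filter]
            refine Finset.sum_congr rfl fun x _ => ?_
            by_cases h : T (x ^ 2) = 0 <;> by_cases h' : T (b * x) = 0 <;> simp [h, h']
        _ = ∑ y : F, ∑ z : F, ∑ x : K, ψ (y * T (x ^ 2)) * ψ (z * T (b * x)) := by
            simp only [hindF, Finset.sum_mul_sum]
            rw [Finset.sum_comm]
            refine Finset.sum_congr rfl fun y _ => ?_
            rw [Finset.sum_comm]
        _ = _ := by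
            rw [sum_erase0]
            congr 1
            · have : ∀ z : F, ∑ x : K, ψ (0 * T (x ^ 2)) * ψ (z * T (b * x)) =
                  if z = 0 then (q : ℂ) ^ (2 * k + 3) else 0 := by
                intro z
                simp only [zero_mul, map_zero_eq_one, one_mul, hsmul, ← mul_assoc]
                rw [sum_char hΨ, hc]
                simp [hb]
              simp only [this]
              simp
            · have : ∀ y ∈ univ.erase (0 : F), ∑ z : F, ∑ x : K, ψ (y * T (x ^ 2)) * ψ (z * T (b * x)) =
                  qch F (- T (b ^ 2)) * (G * g) + (if T (b ^ 2) = 0 then q * G else 0) * qch F y := by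
                intro y hy
                have hy := Finset.ne_of_mem_erase hy
                have h2 := two_ne hF
                have h4 : (4 : F) ≠ 0 := by
                  have : (4 : F) = 2 * 2 := by norm_num
                  rw [this]; exact mul_ne_zero h2 h2
                have e : ∀ z : F, ∑ x : K, ψ (y * T (x ^ 2)) * ψ (z * T (b * x)) =
                    ψ ((- T (b ^ 2) * (4 * y)⁻¹) * z ^ 2) * (qch F y * G) := by
                  intro z
                  simp only [hsmul, ← mul_assoc, ← map_add_eq_mul]
                  rw [quad_sum_lin hK hΨ (by simpa using hy), hext]
                  have : Ψ (-(algebraMap F K z * b) ^ 2 * (4 * algebraMap F K y)⁻¹) = 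
                      ψ ((- T (b ^ 2) * (4 * y)⁻¹) * z ^ 2) := by
                    have e1 : (- T (b ^ 2) * (4 * y)⁻¹) * z ^ 2 = (-(4 * y)⁻¹ * z ^ 2) * T (b ^ 2) := by ring
                    rw [e1, hsmul]
                    congr 1
                    simp only [map_mul, map_neg, map_inv₀, map_pow, map_ofNat]
                    ring
                  rw [this]
                  ring
                simp only [e]
                rw [← Finset.sum_mul]
                by_cases hb2 : T (b ^ 2) = 0
                · simp [hb2, hq]; ring
                · rw [quad_sum hF hψ (by simp [hb2, h4, hy]), if_neg hb2, map_mul, qch_inv (by simp [hy, h4]),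
                    map_mul]
                  have e4 : qch F 4 = 1 := by
                    have : (4 : F) = 2 * 2 := by norm_num
                    rw [this, map_mul, qch_sq h2]
                  rw [e4]
                  have := qch_sq hy
                  linear_combination qch F (-T (b ^ 2)) * G * g * this
              rw [Finset.sum_congr rfl this, Finset.sum_add_distrib, Finset.sum_const, nsmul_eq_mul, hcard0, ← Finset.mul_sum, hsum0]
              ring
    rw [hGg, qch_apply] at h1
    have h2 : (q : ℂ) * q * ((univ.filter fun x : K => T (x ^ 2) = 0 ∧ T (b * x) = 0).card : ℂ)
      = q * q * (q ^ (2 * k + 1) + (s * (quadraticChar F (- T (b ^ 2)) : ℤ)) * (q - 1) * q ^ k) := by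
      rw [h1]; ring
    have h3 := mul_left_cancel₀ (mul_ne_zero hq0 hq0) h2
    exact_mod_cast h3
  · have h1 : g * ∑ b : K, qch F (- T (b ^ 2)) = (q - 1) * qch F (-1) * G := by
      have e : ∀ a : F, qch F a * g = ∑ y, qch F y * ψ (a * y) := by
        intro a
        by_cases ha : a = 0
        · simp [ha, qch_sum hF]
        · rw [gauss_shift ψ ha]
      rw [mul_comm, Finset.sum_mul]
      simp only [e]
      rw [Finset.sum_comm, sum_erase0]
      have e2 : ∀ y ∈ univ.erase (0 : F), ∑ b : K, qch F y * ψ (- T (b ^ 2) * y) = qch F (-1) * G := by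
        intro y hy
        have hy := Finset.ne_of_mem_erase hy
        have e3 : ∀ b : K, - T (b ^ 2) * y = (-y) * T (b ^ 2) := fun b => by ring
        simp only [e3]
        rw [← Finset.mul_sum, hA (-y) (neg_ne_zero.2 hy), ← neg_one_mul y, map_mul]
        linear_combination qch F (-1) * G * qch_sq hy
      rw [Finset.sum_congr rfl e2, Finset.sum_const, nsmul_eq_mul, hcard0]
      simp; ring
    have h2 : (q : ℂ) * ∑ b : K, ((s * quadraticChar F (- T (b ^ 2)) : ℤ) : ℂ) = q * ((q - 1) * q ^ (k + 1)) := by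
      have hs2 : (s : ℂ) * s = 1 := by rcases hs with h | h <;> simp [h]
      push_cast
      simp only [← qch_apply]
      rw [← Finset.mul_sum]
      set Sb := ∑ b : K, qch F (- T (b ^ 2))
      linear_combination (-q * s * Sb) * hm1 + (-s * Sb * qch F (-1)) * hgs + (s * qch F (-1) * g) * h1
        + ((q - 1) * s * G * g) * hm1 + (q - 1) * s * hGg + (q - 1) * q ^ (k + 2) * hs2
    have h3 := mul_left_cancel₀ hq0 h2
    show ∑ b : K, s * quadraticChar F (- T (b ^ 2)) = _
    exact_mod_cast h3

end ExtPart

section WeightPart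

open Finset

variable {F K : Type} [Field F] [Fintype F] [Field K] [Fintype K] [Algebra F K]

/-- Number of points of the quadric on an affine hyperplane. -/
def Ncnt (F : Type) {K : Type} [Field F] [Field K] [Fintype K] [Algebra F K] (b : K) (t : F) : ℕ :=
  (univ.filter fun x : K => Algebra.trace F K (x ^ 2) = 0 ∧ Algebra.trace F K (b * x) = t).card

/-- The quadric. -/
def Dset (F K : Type) [Field F] [Field K] [Fintype K] [Algebra F K] : Finset K :=
  univ.filter fun x : K => Algebra.trace F K (x ^ 2) = 0

lemma Ncnt_eq (b : K) (t : F) :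
    Ncnt F b t = ((Dset F K).filter fun x => Algebra.trace F K (b * x) = t).card := by
  rw [Ncnt, Dset, Finset.filter_filter]

lemma Ncnt_scale (b : K) {t : F} (ht : t ≠ 0) : Ncnt F b t = Ncnt F b 1 := by
  symm
  unfold Ncnt
  refine Finset.card_bij (fun x _ => t • x) ?_ ?_ ?_
  · intro x hx
    simp only [mem_filter, mem_univ, true_and] at hx ⊢
    rw [smul_pow, map_smul, hx.1, mul_smul_comm, map_smul, hx.2]
    simp
  · intro x _ y _ h
    exact smul_right_injective K ht h
  · intro y hy
    simp only [mem_filter, mem_univ, true_and] at hy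
    refine ⟨t⁻¹ • y, ?_, ?_⟩
    · simp only [mem_filter, mem_univ, true_and]
      rw [smul_pow, map_smul, hy.1, mul_smul_comm, map_smul, hy.2]
      simp [ht]
    · simp [smul_smul, ht]

lemma Ncnt_sum (b : K) : ∑ t : F, Ncnt F b t = (Dset F K).card := by
  simp only [Ncnt_eq]
  have h := Finset.card_eq_sum_card_fiberwise (s := Dset F K) (t := (univ : Finset F))
    (f := fun x => Algebra.trace F K (b * x)) (fun x _ => by simp)
  rw [h]

lemma Ncnt_sum' (b : K) :
    Ncnt F b (0 : F) + (Fintype.card F - 1) * Ncnt F b (1 : F) = (Dset F K).card := by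
  rw [← Ncnt_sum (F := F) b, ← Finset.add_sum_erase univ _ (mem_univ (0 : F))]
  congr 1
  rw [Finset.sum_congr rfl (fun t ht => Ncnt_scale b (Finset.ne_of_mem_erase ht)), Finset.sum_const,
    Finset.card_erase_of_mem (mem_univ _), Finset.card_univ, smul_eq_mul]

/-- Everything we need about the numbers. -/
theorem counts2 (hF : ringChar F ≠ 2) (hK : ringChar K ≠ 2) {k : ℕ} {q : ℕ}
    (hq : Fintype.card F = q) (hc : Fintype.card K = q ^ (2 * k + 3)) :
    ∃ κ : K → ℤ, (∀ b, κ b = 0 ↔ Algebra.trace F K (b ^ 2) = 0) ∧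
      (∀ b, κ b = 0 ∨ κ b = 1 ∨ κ b = -1) ∧
      ((Dset F K).card = q ^ (2 * k + 2)) ∧
      (∀ b ≠ 0, (Ncnt F b (0 : F) : ℤ) = q ^ (2 * k + 1) + κ b * (q - 1) * q ^ k) ∧
      (∀ b ≠ 0, ∀ t : F, t ≠ 0 → (Ncnt F b t : ℤ) = q ^ (2 * k + 1) - κ b * q ^ k) ∧
      ∑ b, κ b = (q - 1) * q ^ (k + 1) := by
  obtain ⟨κ, h1, h2, h3, h4, h5⟩ := counts hF hK hq hc
  refine ⟨κ, h1, h2, h3, h4, ?_, h5⟩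
  intro b hb t ht
  rw [Ncnt_scale b ht]
  have e := Ncnt_sum' (F := F) b
  have e4 : (Ncnt F b (0 : F) : ℤ) = q ^ (2 * k + 1) + κ b * (q - 1) * q ^ k := h4 b hb
  have e3 : (Dset F K).card = q ^ (2 * k + 2) := h3
  have hq1 : 1 < q := by rw [← hq]; exact Fintype.one_lt_card
  rw [e3, hq] at e
  have hee : (Ncnt F b (0 : F) : ℤ) + (q - 1) * Ncnt F b (1 : F) = q ^ (2 * k + 2) := by
    rw [← Nat.cast_one (R := ℤ), ← Nat.cast_sub hq1.le]; exact_mod_cast e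
  have hne : (q : ℤ) - 1 ≠ 0 := by
    have : (1 : ℤ) < q := by exact_mod_cast hq1
    omega
  apply mul_left_cancel₀ hne
  rw [e4] at hee
  linear_combination hee

/-- power sums vanish -/
lemma sum_h_zero {k : ℕ} {q : ℕ} (hk : 0 < k) (hq : Fintype.card F = q) {κ : K → ℤ}
    (h3 : (Dset F K).card = q ^ (2 * k + 2))
    (h4 : ∀ b ≠ 0, (Ncnt F b (0 : F) : ℤ) = q ^ (2 * k + 1) + κ b * (q - 1) * q ^ k)
    (h5 : ∀ b ≠ 0, ∀ t : F, t ≠ 0 → (Ncnt F b t : ℤ) = q ^ (2 * k + 1) - κ b * q ^ k)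
    (b : K) (h : F → F) : ∑ x ∈ Dset F K, h (Algebra.trace F K (b * x)) = 0 := by
  have hq0 : (q : F) = 0 := by rw [← hq]; exact Nat.cast_card_eq_zero F
  by_cases hb : b = 0
  · simp [hb, h3, hq0]
  · rw [← Finset.sum_fiberwise (s := Dset F K) (g := fun x => Algebra.trace F K (b * x))]
    apply Finset.sum_eq_zero
    intro t _
    have : ∀ x ∈ (Dset F K).filter (fun x => Algebra.trace F K (b * x) = t),
        h (Algebra.trace F K (b * x)) = h t := by
      intro x hx; rw [(Finset.mem_filter.1 hx).2]
    rw [Finset.sum_congr rfl this, Finset.sum_const, ← Ncnt_eq, nsmul_eq_mul]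
    have hz : ((Ncnt F b t : ℤ) : F) = 0 := by
      by_cases ht : t = 0
      · subst ht
        rw [h4 b hb]; push_cast; simp [hq0, hk.ne']
      · rw [h5 b hb t ht]; push_cast; simp [hq0, hk.ne']
    rw [Int.cast_natCast] at hz
    rw [hz, zero_mul]

end WeightPart

section CodePart

open Finset

variable {F K : Type} [Field F] [Fintype F] [Field K] [Fintype K] [Algebra F K]

/-- the encoding map -/
def encode (F K : Type) [Field F] [Field K] [Algebra F K] (P : K → Prop) :
    K × F →ₗ[F] ({x : K // P x} → F) where
  toFun z := fun d => Algebra.trace F K (z.1 * d.1) + z.2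
  map_add' z w := by
    ext d; simp [add_mul]; ring
  map_smul' a z := by
    ext d; simp [mul_add]

lemma augCode_eq (P : K → Prop) : augCode F K P = Set.range (encode F K P) := by
  ext w
  constructor
  · rintro ⟨b, c, h⟩
    exact ⟨(b, c), by ext d; exact (h d).symm⟩
  · rintro ⟨z, rfl⟩
    exact ⟨z.1, z.2, fun d => rfl⟩

/-- sums over subtype -/
lemma sum_sub (f : K → F) : ∑ d : {x : K // Algebra.trace F K (x ^ 2) = 0}, f d.1 = ∑ x ∈ Dset F K, f x := by
  rw [Dset]
  exact (Finset.sum_subtype (univ.filter fun x : K => Algebra.trace F K (x ^ 2) = 0)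
    (p := fun x => Algebra.trace F K (x ^ 2) = 0) (by simp) f).symm

lemma card_D : Fintype.card {x : K // Algebra.trace F K (x ^ 2) = 0} = (Dset F K).card := by
  rw [Fintype.card_subtype, Dset]

lemma weight_eq (b : K) (c : F) :
    (hammingNorm (encode F K (fun x => Algebra.trace F K (x ^ 2) = 0) (b, c)) : ℤ)
      = (Dset F K).card - Ncnt F b (-c) := by
  have h1 : hammingNorm (encode F K (fun x => Algebra.trace F K (x ^ 2) = 0) (b, c)) =
      ((Dset F K).filter fun x => ¬ Algebra.trace F K (b * x) = -c).card := by
    unfold hammingNorm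
    refine Finset.card_bij (fun d _ => d.1) ?_ ?_ ?_
    · intro d hd
      have hd' := (Finset.mem_filter.1 hd).2
      refine Finset.mem_filter.2 ⟨by simpa [Dset] using d.2, fun h => hd' ?_⟩
      show Algebra.trace F K (b * d.1) + c = 0
      rw [h]; ring
    · intro x _ y _ h; exact Subtype.ext h
    · intro x hx
      simp only [mem_filter, mem_univ, true_and, Dset] at hx
      refine ⟨⟨x, hx.1⟩, Finset.mem_filter.2 ⟨mem_univ _, ?_⟩, rfl⟩
      intro h
      exact hx.2 (eq_neg_of_add_eq_zero_left h)
  rw [h1, Ncnt_eq, ← Finset.card_filter_add_card_filter_not (s := Dset F K) (fun x => Algebra.trace F K (b * x) = -c)]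
  push_cast; ring

lemma self_orth (hF : ringChar F ≠ 2) 
    (H : ∀ (b : K) (h : F → F), ∑ x ∈ Dset F K, h (Algebra.trace F K (b * x)) = 0) (b b' : K) (c c' : F) :
    ∑ x ∈ Dset F K, (Algebra.trace F K (b * x) + c) * (Algebra.trace F K (b' * x) + c') = 0 := by
  have h2 := two_ne hF
  apply (mul_eq_zero.1 _).resolve_left h2
  have e1 := H (b + b') (fun t => t ^ 2)
  have e2 := H b (fun t => t ^ 2 - 2 * c' * t)
  have e3 := H b' (fun t => t ^ 2 - 2 * c * t)
  have e4 := H 0 (fun t => 2 * c * c')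
  rw [Finset.mul_sum]
  have : ∀ x ∈ Dset F K, 2 * ((Algebra.trace F K (b * x) + c) * (Algebra.trace F K (b' * x) + c')) =
      (Algebra.trace F K ((b + b') * x)) ^ 2 - ((Algebra.trace F K (b * x)) ^ 2 - 2 * c' * Algebra.trace F K (b * x))
       - ((Algebra.trace F K (b' * x)) ^ 2 - 2 * c * Algebra.trace F K (b' * x)) + 2 * c * c' := by
    intro x _
    rw [add_mul b b' x, map_add]; ring
  rw [Finset.sum_congr rfl this, Finset.sum_add_distrib, Finset.sum_sub_distrib, Finset.sum_sub_distrib]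
  rw [e1, e2, e3, e4]; simp

/-- dual dimension -/
lemma card_dual {ι : Type} [Fintype ι] (W : Submodule F (ι → F)) {r : ℕ}
    (hW : Nat.card W = Fintype.card F ^ r) :
    Nat.card (dualCode (W : Set (ι → F))) = Fintype.card F ^ (Fintype.card ι - r) := by
  have hr : Module.finrank F W = r := by
    have := Module.natCard_eq_pow_finrank (K := F) (V := W)
    rw [hW, Nat.card_eq_fintype_card] at this
    exact (Nat.pow_right_injective (Fintype.one_lt_card (α := F)) this).symm
  let B : LinearMap.BilinForm F (ι → F) := dotProductBilin F F
  have hB : B.Nondegenerate := by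
    constructor
    · intro x hx
      ext i
      have := hx (Pi.single i 1)
      simpa [B, dotProductBilin] using this
    · intro x hx
      ext i
      have := hx (Pi.single i 1)
      simpa [B, dotProductBilin] using this
  have hf := LinearMap.BilinForm.finrank_orthogonal hB W
  rw [hr, Module.finrank_pi] at hf
  have hset : dualCode (W : Set (ι → F)) = (B.orthogonal W : Set (ι → F)) := by
    ext u
    simp only [dualCode, Set.mem_ofPred_eq, SetLike.mem_coe, LinearMap.BilinForm.mem_orthogonal_iff]
    refine forall₂_congr fun v _ => ?_
    simp [B, dotProductBilin, dotProduct, mul_comm]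
  rw [hset, ← hf, ← Nat.card_eq_fintype_card]
  exact Module.natCard_eq_pow_finrank (K := F) (V := B.orthogonal W)

/-- dual distance -/
lemma dual_dist (hF : ringChar F ≠ 2) (hD : 1 < (Dset F K).card) :
    IsMinDist (dualCode (augCode F K (fun x => Algebra.trace F K (x ^ 2) = 0))) 3 := by
  have h2 := two_ne hF
  constructor
  · obtain ⟨x, hx, hx0⟩ := Finset.exists_mem_ne hD 0
    have hx' : Algebra.trace F K (x ^ 2) = 0 := by simpa [Dset] using hx
    let d0 : {x : K // Algebra.trace F K (x ^ 2) = 0} := ⟨0, by simp⟩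
    let d1 : {x : K // Algebra.trace F K (x ^ 2) = 0} := ⟨x, hx'⟩
    let d2 : {x : K // Algebra.trace F K (x ^ 2) = 0} := ⟨-x, by simpa using hx'⟩
    have n01 : d0 ≠ d1 := fun h => hx0 (congrArg Subtype.val h).symm
    have n02 : d0 ≠ d2 := fun h => hx0 (by simpa [d0, d2] using (congrArg Subtype.val h).symm)
    have n12 : d1 ≠ d2 := by
      intro h
      have h' : x = -x := congrArg Subtype.val h
      have h3 : (2 : F) • x = 0 := by
        rw [two_smul]; nth_rewrite 2 [h']; simp
      rcases smul_eq_zero.1 h3 with h4 | h4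
      · exact h2 h4
      · exact hx0 h4
    let w : {x : K // Algebra.trace F K (x ^ 2) = 0} → F :=
      Pi.single d1 1 + Pi.single d2 1 + Pi.single d0 (-2)
    have w1 : w d1 = 1 := by simp [w, n12, n01.symm]
    have w2 : w d2 = 1 := by simp [w, n12.symm, n02.symm]
    have w0 : w d0 = -2 := by simp [w, n01, n02]
    refine ⟨w, ?_, ?_, ?_⟩
    · rintro v ⟨b, c, hv⟩
      simp only [w, Pi.add_apply, add_mul, Finset.sum_add_distrib]
      simp only [Pi.single_apply, ite_mul, zero_mul, Finset.sum_ite_eq', mem_univ, if_true, hv]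
      simp [d0, d1, d2]; ring
    · intro h; rw [h] at w1; simp at w1
    · have : univ.filter (fun i => w i ≠ 0) = {d0, d1, d2} := by
        ext i
        simp only [mem_filter, mem_univ, true_and, mem_insert, mem_singleton]
        constructor
        · intro h
          by_contra! hh
          apply h
          simp [w, hh]
        · rintro (rfl | rfl | rfl)
          · rw [w0]; simpa using h2
          · rw [w1]; simp
          · rw [w2]; simp
      unfold hammingNorm
      rw [this, Finset.card_insert_of_notMem (by simp [n01, n02]), Finset.card_pair n12]
  · intro u hu hu0
    by_contra! hlt
    unfold hammingNorm at hlt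
    have hone : ∑ i, u i = 0 := by
      have := hu (fun _ => 1) ⟨0, 1, by simp⟩
      simpa using this
    have hb : ∀ b : K, ∑ i, u i * Algebra.trace F K (b * i.1) = 0 := by
      intro b
      exact hu _ ⟨b, 0, fun d => by rw [add_zero]⟩
    set S := univ.filter (fun i => u i ≠ 0) with hS
    have hsupp : ∀ f : {x : K // Algebra.trace F K (x ^ 2) = 0} → F,
        ∑ i, u i * f i = ∑ i ∈ S, u i * f i := by
      intro f
      symm
      apply Finset.sum_subset (subset_univ _)
      intro i _ hi
      have : u i = 0 := by simpa [hS] using hi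
      rw [this, zero_mul]
    have hone' : ∑ i ∈ S, u i = 0 := by
      have := hsupp (fun _ => 1)
      simp only [mul_one] at this
      rw [← this]; exact hone
    have hcases : S.card = 0 ∨ S.card = 1 ∨ S.card = 2 := by
      have : S.card < 3 := hlt
      omega
    have hmem : ∀ i ∈ S, u i ≠ 0 := fun i hi => by simpa [hS] using hi
    rcases hcases with h | h | h
    · apply hu0
      ext i
      rw [Finset.card_eq_zero] at h
      by_contra hi
      have : i ∈ S := by simpa [hS] using hi
      rw [h] at this; simp at this
    · obtain ⟨i, hi⟩ := Finset.card_eq_one.1 h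
      rw [hi, Finset.sum_singleton] at hone'
      exact hmem i (by rw [hi]; simp) hone'
    · obtain ⟨i, j, hij, hi⟩ := Finset.card_eq_two.1 h
      rw [hi, Finset.sum_pair hij] at hone'
      apply hij
      apply Subtype.ext
      rw [← sub_eq_zero]
      by_contra hne
      obtain ⟨z, hz⟩ := Algebra.trace_surjective F K 1
      have e := hb (z * (i.1 - j.1)⁻¹)
      rw [hsupp, hi, Finset.sum_pair hij] at e
      have ez : Algebra.trace F K (z * (i.1 - j.1)⁻¹ * i.1) - Algebra.trace F K (z * (i.1 - j.1)⁻¹ * j.1) = 1 := by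
        rw [← map_sub, ← mul_sub, mul_assoc, inv_mul_cancel₀ hne, mul_one, hz]
      apply hmem i (by rw [hi]; simp)
      linear_combination e - Algebra.trace F K (z * (i.1 - j.1)⁻¹ * j.1) * hone' - u i * ez

end CodePart

section FinalPart

open Finset

variable {F K : Type} [Field F] [Fintype F] [Field K] [Fintype K] [Algebra F K]

lemma map_eq_sum {α : Type} (s : Finset α) (g : α → ℤ) :
    s.val.map g = ∑ a ∈ s, ({g a} : Multiset ℤ) := by
  have h := Multiset.sum_map_singleton (s.val.map g)
  rw [Multiset.map_map] at h
  exact h.symm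

lemma multi (g : K × F → ℤ) (κ : K → ℤ) (hκ : ∀ b, κ b = 0 ∨ κ b = 1 ∨ κ b = -1)
    (hκ0 : κ 0 = 0) {q : ℕ} (hq : Fintype.card F = q) (A B w0 wk : ℤ)
    (h00 : g (0, 0) = A) (h01 : ∀ c ≠ 0, g (0, c) = B)
    (h0 : ∀ b ≠ 0, g (b, 0) = w0 - κ b * (q - 1) * wk)
    (h1 : ∀ b ≠ 0, ∀ c ≠ 0, g (b, c) = w0 + κ b * wk) {n0 n1 n2 : ℕ}
    (hn0 : (univ.filter fun b : K => κ b = 0).card = n0 + 1)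
    (hn1 : (univ.filter fun b : K => κ b = 1).card = n1)
    (hn2 : (univ.filter fun b : K => κ b = -1).card = n2) :
    (univ : Finset (K × F)).val.map g = Multiset.replicate 1 A + Multiset.replicate (q - 1) B
      + Multiset.replicate (q * n0) w0
      + Multiset.replicate ((q - 1) * n1) (w0 + wk)
      + Multiset.replicate ((q - 1) * n2) (w0 - wk)
      + Multiset.replicate n1 (w0 - (q - 1) * wk)
      + Multiset.replicate n2 (w0 + (q - 1) * wk) := by
  have hq1 : 1 < q := by rw [← hq]; exact Fintype.one_lt_card
  rw [map_eq_sum, Fintype.sum_prod_type]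
  have inner : ∀ b : K, ∀ u v : ℤ, g (b, 0) = u → (∀ c ≠ 0, g (b, c) = v) →
      ∑ c : F, ({g (b, c)} : Multiset ℤ) = {u} + (q - 1) • {v} := by
    intro b u v hu hv
    rw [← Finset.add_sum_erase univ _ (mem_univ (0 : F)), hu,
      Finset.sum_congr rfl (fun c hc => by rw [hv c (Finset.ne_of_mem_erase hc)]),
      Finset.sum_const, Finset.card_erase_of_mem (mem_univ _), Finset.card_univ, hq]
  let R : ℤ → Multiset ℤ := fun t => {w0 - t * (q - 1) * wk} + (q - 1) • {w0 + t * wk}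
  have hR : ∀ b ∈ univ.erase (0 : K), ∑ c : F, ({g (b, c)} : Multiset ℤ) = R (κ b) := by
    intro b hb
    have hb := Finset.ne_of_mem_erase hb
    exact inner b _ _ (h0 b hb) (h1 b hb)
  rw [← Finset.add_sum_erase univ _ (mem_univ (0 : K)), inner 0 A B h00 h01,
    Finset.sum_congr rfl hR]
  have hsplit : ∑ b ∈ univ.erase (0 : K), R (κ b) = n0 • R 0 + n1 • R 1 + n2 • R (-1) := by
    have hmaps : ∀ b ∈ univ.erase (0 : K), κ b ∈ ({0, 1, -1} : Finset ℤ) := by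
      intro b _
      simpa using hκ b
    rw [← Finset.sum_fiberwise_of_maps_to hmaps]
    have hcst : ∀ t : ℤ, ∑ b ∈ (univ.erase (0 : K)).filter (fun b => κ b = t), R (κ b) =
        ((univ.erase (0 : K)).filter (fun b => κ b = t)).card • R t := by
      intro t
      rw [Finset.sum_congr rfl (fun b hb => by rw [(Finset.mem_filter.1 hb).2]), Finset.sum_const]
    rw [Finset.sum_congr rfl (fun t _ => hcst t)]
    rw [Finset.sum_insert (by simp), Finset.sum_pair (by norm_num)]
    have c0 : ((univ.erase (0 : K)).filter (fun b => κ b = 0)).card = n0 := by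
      rw [Finset.filter_erase, Finset.card_erase_of_mem (by simp [hκ0]), hn0]; rfl
    have c1 : ((univ.erase (0 : K)).filter (fun b => κ b = 1)).card = n1 := by
      rw [Finset.filter_erase, Finset.erase_eq_of_notMem (by simp [hκ0]), hn1]
    have c2 : ((univ.erase (0 : K)).filter (fun b => κ b = -1)).card = n2 := by
      rw [Finset.filter_erase, Finset.erase_eq_of_notMem (by simp [hκ0]), hn2]
    rw [c0, c1, c2, add_assoc]
  rw [hsplit]
  simp only [R, zero_mul, sub_zero, add_zero, one_mul, neg_mul, sub_neg_eq_add, ← sub_eq_add_neg,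
    ← Multiset.nsmul_singleton, nsmul_add, smul_smul, one_smul]
  have e0 : (q * n0) • ({w0} : Multiset ℤ) = n0 • {w0} + (n0 * (q - 1)) • {w0} := by
    rw [← add_smul]
    congr 1
    obtain ⟨r, rfl⟩ : ∃ r, q = r + 1 := ⟨q - 1, by omega⟩
    simp; ring
  rw [e0, mul_comm (q - 1) n1, mul_comm (q - 1) n2]
  abel

lemma half_toNat (X : ℤ) (n : ℕ) (h : X = 2 * n) : (X / 2).toNat = n := by
  rw [h]; simp

end FinalPart
theorem stmt12 (p e q m l : ℕ) (hp : p.Prime) (hodd : Odd p) (he : 0 < e)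
    (hq : q = p ^ e) (hmodd : Odd m) (hm3 : 3 ≤ m)
    (hl : l = e * (p - 1) * (m + 3) / 4)
    (Fq Fm : Type) [Field Fq] [Field Fm] [Fintype Fq] [Fintype Fm] [Algebra Fq Fm]
    (hcq : Fintype.card Fq = q) (hcm : Fintype.card Fm = q ^ m)
    (C : Set ({x : Fm // Algebra.trace Fq Fm (x ^ 2) = 0} → Fq))
    (hC : C = augCode Fq Fm (fun x => Algebra.trace Fq Fm (x ^ 2) = 0)) :
    -- length `q^{m-1}`
    Fintype.card {x : Fm // Algebra.trace Fq Fm (x ^ 2) = 0} = q ^ (m - 1) ∧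
    -- dimension `m + 1`
    Nat.card C = q ^ (m + 1) ∧
    -- minimum distance
    IsMinDist C ((q - 1) * q ^ ((m - 3) / 2) * (q ^ ((m - 1) / 2) - 1)) ∧
    -- weight distribution as a multiset
    (C.toFinset.val.map fun c => (hammingNorm c : ℤ))
      = Multiset.replicate 1 (0 : ℤ)
        + Multiset.replicate (q - 1) ((q : ℤ) ^ (m - 1))
        + Multiset.replicate (q * (q ^ (m - 1) - 1)) (((q : ℤ) - 1) * (q : ℤ) ^ (m - 2))
        + Multiset.replicate
            (((((q : ℤ) - 1) ^ 2 * ((q : ℤ) ^ (m - 1) + (-1) ^ l * (q : ℤ) ^ ((m - 1) / 2))) / 2).toNat)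
            (((q : ℤ) - 1) * (q : ℤ) ^ (m - 2) + (-1) ^ l * (q : ℤ) ^ ((m - 3) / 2))
        + Multiset.replicate
            (((((q : ℤ) - 1) ^ 2 * ((q : ℤ) ^ (m - 1) + (-1) ^ (l + 1) * (q : ℤ) ^ ((m - 1) / 2))) / 2).toNat)
            (((q : ℤ) - 1) * (q : ℤ) ^ (m - 2) - (-1) ^ l * (q : ℤ) ^ ((m - 3) / 2))
        + Multiset.replicate
            (((((q : ℤ) - 1) * ((q : ℤ) ^ (m - 1) + (-1) ^ l * (q : ℤ) ^ ((m - 1) / 2))) / 2).toNat)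
            (((q : ℤ) - 1) * (q : ℤ) ^ (m - 2) - (-1) ^ l * ((q : ℤ) - 1) * (q : ℤ) ^ ((m - 3) / 2))
        + Multiset.replicate
            (((((q : ℤ) - 1) * ((q : ℤ) ^ (m - 1) + (-1) ^ (l + 1) * (q : ℤ) ^ ((m - 1) / 2))) / 2).toNat)
            (((q : ℤ) - 1) * (q : ℤ) ^ (m - 2) + (-1) ^ l * ((q : ℤ) - 1) * (q : ℤ) ^ ((m - 3) / 2)) ∧
    -- self-orthogonality for `m > 3`
    (3 < m → C ⊆ dualCode C) ∧
    -- the dual code has dimension `q^{m-1} - m - 1` and minimum distance `3`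
    Nat.card (dualCode C) = q ^ (q ^ (m - 1) - m - 1) ∧
    IsMinDist (dualCode C) 3 := by
  obtain ⟨k, rfl⟩ : ∃ k, m = 2 * k + 3 := by
    obtain ⟨r, hr⟩ := hmodd
    exact ⟨r - 1, by omega⟩
  have i1 : 2 * k + 3 - 1 = 2 * k + 2 := by omega
  have i2 : 2 * k + 3 - 2 = 2 * k + 1 := by omega
  have i3 : (2 * k + 3 - 3) / 2 = k := by omega
  have i4 : (2 * k + 2) / 2 = k + 1 := by omega
  simp only [i1, i2, i3, i4]
  have hqodd : Odd q := by rw [hq]; exact hodd.pow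
  have hF : ringChar Fq ≠ 2 := by
    intro h
    have := FiniteField.even_card_of_char_two h
    rw [hcq] at this
    have := Nat.odd_iff.1 hqodd
    omega
  have hK : ringChar Fm ≠ 2 := by
    intro h
    have := FiniteField.even_card_of_char_two h
    rw [hcm] at this
    have := Nat.odd_iff.1 (hqodd.pow (n := 2 * k + 3))
    omega
  have hq1 : 1 < q := by rw [← hcq]; exact Fintype.one_lt_card
  have hq3 : 3 ≤ q := by
    have := Nat.odd_iff.1 hqodd
    omega
  have hqZ : (1 : ℤ) < q := by exact_mod_cast hq1
  have hcast1 : ((q - 1 : ℕ) : ℤ) = (q : ℤ) - 1 := by rw [Nat.cast_sub hq1.le]; simp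
  obtain ⟨κ, hκ0, hκ, hD, hN0, hN1, hsum⟩ := counts2 (F := Fq) (K := Fm) hF hK hcq hcm
  have hwt := weight_eq (F := Fq) (K := Fm)
  rw [hD] at hwt
  set w0 : ℤ := ((q : ℤ) - 1) * (q : ℤ) ^ (2 * k + 1) with hw0
  set E := encode Fq Fm (fun x => Algebra.trace Fq Fm (x ^ 2) = 0) with hE
  have g00 : (hammingNorm (E (0, 0)) : ℤ) = 0 := by
    have : E (0, 0) = 0 := map_zero E
    rw [this]; simp
  have g01 : ∀ c : Fq, c ≠ 0 → (hammingNorm (E (0, c)) : ℤ) = (q : ℤ) ^ (2 * k + 2) := by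
    intro c hc
    rw [hE, hwt 0 c]
    have : Ncnt Fq (0 : Fm) (-c) = 0 := by
      unfold Ncnt
      rw [Finset.card_eq_zero, Finset.filter_eq_empty_iff]
      rintro x - ⟨_, h⟩
      rw [zero_mul, map_zero] at h
      exact hc (neg_eq_zero.1 h.symm)
    rw [this]; simp
  have g0 : ∀ b : Fm, b ≠ 0 → (hammingNorm (E (b, 0)) : ℤ) = w0 - κ b * (q - 1) * (q : ℤ) ^ k := by
    intro b hb
    rw [hE, hwt b 0, neg_zero, hN0 b hb, hw0]
    push_cast; ring
  have g1 : ∀ b : Fm, b ≠ 0 → ∀ c : Fq, c ≠ 0 → (hammingNorm (E (b, c)) : ℤ) = w0 + κ b * (q : ℤ) ^ k := by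
    intro b hb c hc
    rw [hE, hwt b c, hN1 b hb (-c) (neg_ne_zero.2 hc), hw0]
    push_cast; ring
  -- lower bound
  have hqk : (0 : ℤ) < (q : ℤ) ^ k := by positivity
  have hqk1 : (q : ℤ) ≤ (q : ℤ) ^ (k + 1) := by
    rw [pow_succ]; nlinarith
  set dmin : ℤ := ((q : ℤ) - 1) * (q : ℤ) ^ k * ((q : ℤ) ^ (k + 1) - 1) with hdmin
  have hdw : dmin = w0 - (q - 1) * (q : ℤ) ^ k := by rw [hdmin, hw0]; ring
  have hdpos : 0 < dmin := by
    rw [hdmin]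
    have a1 : (0 : ℤ) < (q : ℤ) - 1 := by omega
    have a2 : (0 : ℤ) < (q : ℤ) ^ (k + 1) - 1 := by omega
    positivity
  have hlow : ∀ z : Fm × Fq, z ≠ 0 → dmin ≤ hammingNorm (E z) := by
    rintro ⟨b, c⟩ hz
    have a1 : (1 : ℤ) * (q : ℤ) ^ k ≤ ((q : ℤ) - 1) * (q : ℤ) ^ k := by
      apply mul_le_mul_of_nonneg_right _ hqk.le; omega
    by_cases hb : b = 0
    · subst hb
      have hc : c ≠ 0 := by rintro rfl; exact hz rfl
      rw [g01 c hc, hdw, hw0]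
      have : (0 : ℤ) < (q : ℤ) ^ (2 * k + 1) := by positivity
      have e : (q : ℤ) ^ (2 * k + 2) = q * (q : ℤ) ^ (2 * k + 1) := by ring
      rw [e]; nlinarith
    · by_cases hc : c = 0
      · subst hc
        rw [g0 b hb, hdw]
        rcases hκ b with h | h | h <;> rw [h] <;> linarith
      · rw [g1 b hb c hc, hdw]
        rcases hκ b with h | h | h <;> rw [h] <;> linarith
  have hEinj : Function.Injective E := by
    rw [injective_iff_map_eq_zero]
    intro z hz
    by_contra hne
    have := hlow z hne
    rw [hz, hammingNorm_zero] at this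
    push_cast at this
    omega
  have hCr : C = Set.range E := by rw [hC, augCode_eq]
  have hqq : Fintype.card Fq = q := hcq
  -- counts of classes
  obtain ⟨n0, hn0⟩ : ∃ n0, n0 + 1 = q ^ (2 * k + 2) :=
    ⟨q ^ (2 * k + 2) - 1, Nat.sub_add_cancel (Nat.one_le_pow _ _ (by omega))⟩
  have c0 : (Finset.univ.filter fun b : Fm => κ b = 0).card = n0 + 1 := by
    rw [hn0, ← hD, Dset]
    congr 1
    ext b
    simp [hκ0]
  obtain ⟨n1, c1⟩ : ∃ n1, (Finset.univ.filter fun b : Fm => κ b = 1).card = n1 := ⟨_, rfl⟩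
  obtain ⟨n2, c2⟩ : ∃ n2, (Finset.univ.filter fun b : Fm => κ b = -1).card = n2 := ⟨_, rfl⟩
  have hind : ∀ b : Fm, κ b = (if κ b = 1 then (1 : ℤ) else 0) - (if κ b = -1 then (1 : ℤ) else 0) ∧
      (1 : ℤ) = (if κ b = 0 then (1 : ℤ) else 0) + (if κ b = 1 then (1 : ℤ) else 0) + (if κ b = -1 then (1 : ℤ) else 0) := by
    intro b
    rcases hκ b with h | h | h <;> rw [h] <;> norm_num
  have hdiff : (n1 : ℤ) - n2 = (q - 1) * q ^ (k + 1) := by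
    rw [← hsum, Finset.sum_congr rfl (fun b _ => (hind b).1), Finset.sum_sub_distrib,
      Finset.sum_boole, Finset.sum_boole, c1, c2]
  have htot : (q : ℤ) ^ (2 * k + 3) = (n0 + 1) + n1 + n2 := by
    have h1 : ∑ b : Fm, (1 : ℤ) = (q : ℤ) ^ (2 * k + 3) := by
      rw [Finset.sum_const, Finset.card_univ, hcm]; simp
    rw [← h1, Finset.sum_congr rfl (fun b _ => (hind b).2), Finset.sum_add_distrib, Finset.sum_add_distrib,
      Finset.sum_boole, Finset.sum_boole, Finset.sum_boole, c0, c1, c2]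
    simp
  have hn0Z : (n0 : ℤ) + 1 = (q : ℤ) ^ (2 * k + 2) := by exact_mod_cast hn0
  have hn1 : ((q : ℤ) - 1) * ((q : ℤ) ^ (2 * k + 2) + (q : ℤ) ^ (k + 1)) = 2 * n1 := by
    linear_combination -hdiff + htot + hn0Z
  have hn2 : ((q : ℤ) - 1) * ((q : ℤ) ^ (2 * k + 2) - (q : ℤ) ^ (k + 1)) = 2 * n2 := by
    linear_combination hdiff + htot + hn0Z
  have hn1pos : 0 < n1 := by
    have : (0 : ℤ) < 2 * n1 := by
      rw [← hn1]
      have a1 : (0 : ℤ) < (q : ℤ) - 1 := by omega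
      positivity
    omega
  have hCfin : C.toFinset = Finset.univ.map ⟨E, hEinj⟩ := by
    ext w
    simp [hCr]
  have hCcard : Nat.card C = q ^ (2 * k + 3 + 1) := by
    rw [hCr, Nat.card_range_of_injective hEinj, Nat.card_prod, Nat.card_eq_fintype_card,
      Nat.card_eq_fintype_card, hcm, hcq, ← pow_succ]
  have hdcast : (((q - 1) * q ^ k * (q ^ (k + 1) - 1) : ℕ) : ℤ) = dmin := by
    rw [hdmin]
    push_cast [hcast1, Nat.cast_sub (Nat.one_le_pow (k + 1) q (by omega))]
    ring
  have hcardD : Fintype.card {x : Fm // Algebra.trace Fq Fm (x ^ 2) = 0} = q ^ (2 * k + 2) := by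
    rw [card_D, hD]
  refine ⟨hcardD, hCcard, ⟨?_, ?_⟩, ?_, ?_, ?_, ?_⟩
  · obtain ⟨b, hb⟩ := Finset.card_pos.1 (by rw [c1]; exact hn1pos)
    have hb1 : κ b = 1 := (Finset.mem_filter.1 hb).2
    have hb0 : b ≠ 0 := by
      rintro rfl
      have := (hκ0 0).2 (by simp)
      omega
    refine ⟨E (b, 0), by rw [hCr]; exact ⟨_, rfl⟩, ?_, ?_⟩
    · intro h
      have := hEinj (h.trans (map_zero E).symm)
      exact hb0 (congrArg Prod.fst this)
    · have := g0 b hb0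
      rw [hb1, one_mul, ← hdw, ← hdcast] at this
      exact_mod_cast this
  · intro w hw hw0'
    rw [hCr] at hw
    obtain ⟨z, rfl⟩ := hw
    have := hlow z (by rintro rfl; exact hw0' (map_zero E))
    rw [← hdcast] at this
    exact_mod_cast this
  · rw [hCfin, Finset.map_val, Multiset.map_map]
    have hM := multi (F := Fq) (K := Fm) (fun z => (hammingNorm (E z) : ℤ)) κ hκ ((hκ0 0).2 (by simp)) hcq
      0 ((q : ℤ) ^ (2 * k + 2)) w0 ((q : ℤ) ^ k) g00 g01 g0 g1 c0 c1 c2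
    have en0 : q ^ (2 * k + 2) - 1 = n0 := by omega
    have hm1 : ((q : ℤ) - 1) ^ 2 * ((q : ℤ) ^ (2 * k + 2) + (q : ℤ) ^ (k + 1)) = 2 * ((q - 1) * n1 : ℕ) := by
      rw [Nat.cast_mul, hcast1]; linear_combination ((q : ℤ) - 1) * hn1
    have hm2 : ((q : ℤ) - 1) ^ 2 * ((q : ℤ) ^ (2 * k + 2) - (q : ℤ) ^ (k + 1)) = 2 * ((q - 1) * n2 : ℕ) := by
      rw [Nat.cast_mul, hcast1]; linear_combination ((q : ℤ) - 1) * hn2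
    rw [en0]
    refine Eq.trans ?_ (hM.trans ?_)
    · rfl
    rcases neg_one_pow_eq_or ℤ l with hl1 | hl1
    · simp only [pow_succ (-1 : ℤ) l, hl1, one_mul, neg_mul, mul_neg, mul_one, ← sub_eq_add_neg]
      rw [half_toNat _ _ hm1, half_toNat _ _ hm2, half_toNat _ _ hn1, half_toNat _ _ hn2]
    · simp only [pow_succ (-1 : ℤ) l, hl1, one_mul, neg_mul, mul_neg, mul_one, neg_neg, sub_neg_eq_add,
        ← sub_eq_add_neg]
      rw [half_toNat _ _ hm1, half_toNat _ _ hm2, half_toNat _ _ hn1, half_toNat _ _ hn2]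
      abel
  · intro hm
    have hk : 0 < k := by omega
    have H := sum_h_zero hk hcq hD hN0 hN1
    intro u hu v hv
    rw [hC] at hu hv
    obtain ⟨b, c, hu⟩ := hu
    obtain ⟨b', c', hv⟩ := hv
    have := self_orth hF H b b' c c'
    rw [← sum_sub] at this
    simp only [hu, hv]
    exact this
  · have hset : C = (LinearMap.range E : Set _) := by rw [hCr]; rfl
    have hW : Nat.card (LinearMap.range E) = Fintype.card Fq ^ (2 * k + 3 + 1) := by
      rw [hcq, ← hCcard, hset]; rfl
    have := card_dual (LinearMap.range E) hW
    rw [← hset, hcardD, hcq] at this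
    rw [this]
    congr 1
  · rw [hC]
    apply dual_dist hF
    rw [hD]
    exact Nat.one_lt_pow (by omega) hq1
end
end

section
/- Let q = p^e with p an odd prime and e a positive integer, and let m ≥ 3 be odd, so that |D| = q^{m−1}. Then the code \overline{C_D}' generated by the rows of [I_{m+1} | G_2] has length q^{m−1} + m + 1, dimension m + 1, and minimum distance d' satisfying d' ≥ (q−1)q^{(m−3)/2}(q^{(m−1)/2} − 1) + 1. Moreover, its dual (\overline{C_D}')^⊥ has length q^{m−1} + m + 1, dimension q^{m−1}, and minimum distance d'^⊥ satisfying 2 ≤ d'^⊥ ≤ 3. -/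
open scoped Classical

noncomputable section

lemma gauss_norm {F : Type} [Field F] [Fintype F] (h2 : (2 : F) ≠ 0) (ψ : AddChar F ℂ)
    (hψ : ψ.IsPrimitive) (a b : F) (ha : a ≠ 0) :
    ‖∑ x, ψ (a * x ^ 2 + b * x)‖ ^ 2 = (Fintype.card F : ℝ) := by
  have key : ((‖∑ x, ψ (a * x ^ 2 + b * x)‖ : ℂ)) ^ 2 = (Fintype.card F : ℂ) := by
    rw [← Complex.mul_conj', map_sum, Finset.mul_sum]
    have h1 : ∀ y : F, (∑ x, ψ (a * x ^ 2 + b * x)) * (starRingEnd ℂ) (ψ (a * y ^ 2 + b * y))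
        = ∑ h, ψ (a * h ^ 2 + b * h) * ψ (y * (2 * a * h)) := by
      intro y
      rw [Finset.sum_mul, ← Equiv.sum_comp (Equiv.addRight y)]
      refine Finset.sum_congr rfl fun h _ => ?_
      rw [← AddChar.map_neg_eq_conj, ← AddChar.map_add_eq_mul, ← AddChar.map_add_eq_mul]
      congr 1
      simp only [Equiv.coe_addRight]
      ring
    rw [Finset.sum_congr rfl fun y _ => h1 y, Finset.sum_comm]
    simp_rw [← Finset.mul_sum, AddChar.sum_mulShift _ hψ]
    rw [Finset.sum_eq_single 0]
    · simp
    · intro h _ hh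
      simp [h2, ha, hh]
    · simp
  exact_mod_cast key

section
variable {K L : Type} [Field K] [Field L] [Fintype K] [Fintype L] [Algebra K L]

lemma nonsq_ext (hm : Odd (Module.finrank K L)) (u : K) (hu : ¬ IsSquare u) :
    ¬ IsSquare (algebraMap K L u) := by
  rintro ⟨s, hs⟩
  have h := congrArg (Algebra.norm K) hs
  rw [Algebra.norm_algebraMap, map_mul] at h
  obtain ⟨k, hk⟩ := hm
  have hu0 : u ≠ 0 := by
    rintro rfl
    exact hu ⟨0, by simp⟩
  apply hu
  refine ⟨Algebra.norm K s / u ^ k, ?_⟩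
  rw [div_mul_div_comm, ← h, hk]
  field_simp
  ring

lemma card_ker :
    Fintype.card K * (Finset.univ.filter fun t : L => Algebra.trace K L t = 0).card
      = Fintype.card L := by
  have h := Finset.card_eq_sum_card_fiberwise (s := (Finset.univ : Finset L))
    (t := (Finset.univ : Finset K)) (f := Algebra.trace K L) (by simp)
  rw [Finset.card_univ] at h
  rw [h, Finset.sum_congr rfl (fun y _ => AddMonoidHom.card_fiber_eq_of_mem_range
    (Algebra.trace K L) (y := 0) (Algebra.trace_surjective K L y) ⟨0, by simp⟩)]
  simp

lemma card_quadric (h2K : ringChar K ≠ 2) (h2L : ringChar L ≠ 2)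
    (hm : Odd (Module.finrank K L)) :
    Fintype.card K * (Finset.univ.filter fun x : L => Algebra.trace K L (x ^ 2) = 0).card
      = Fintype.card L := by
  rw [← card_ker (K := K) (L := L)]
  congr 1
  obtain ⟨u, hu⟩ := FiniteField.exists_nonsquare h2K
  have hu' := nonsq_ext (L := L) hm u hu
  have hu0 : u ≠ 0 := by
    rintro rfl
    exact hu ⟨0, by simp⟩
  have hχ : quadraticChar L (algebraMap K L u) = -1 :=
    quadraticChar_neg_one_iff_not_isSquare.2 hu'
  have hzero : ∑ t : L, (if Algebra.trace K L t = 0 then quadraticChar L t else 0) = 0 := by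
    have hu1 : algebraMap K L u ≠ 0 := by simpa using hu0
    have := Equiv.sum_comp (Equiv.mulLeft₀ _ hu1)
      (fun t : L => (if Algebra.trace K L t = 0 then quadraticChar L t else 0))
    have h3 : ∀ t : L, (if Algebra.trace K L (Equiv.mulLeft₀ _ hu1 t) = 0
        then quadraticChar L (Equiv.mulLeft₀ _ hu1 t) else 0)
        = - (if Algebra.trace K L t = 0 then quadraticChar L t else 0) := by
      intro t
      have : Algebra.trace K L (algebraMap K L u * t) = u * Algebra.trace K L t := by
        rw [← Algebra.smul_def, map_smul, smul_eq_mul]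
      have e0 : Equiv.mulLeft₀ _ hu1 t = algebraMap K L u * t := rfl
      simp only [e0, this, map_mul, hχ, mul_eq_zero, hu0, false_or]
      split_ifs <;> simp
    rw [Finset.sum_congr rfl fun t _ => h3 t, Finset.sum_neg_distrib] at this
    linarith
  have h := Finset.card_eq_sum_card_fiberwise
    (s := Finset.univ.filter fun x : L => Algebra.trace K L (x ^ 2) = 0)
    (t := Finset.univ.filter fun t : L => Algebra.trace K L t = 0) (f := fun x => x ^ 2)
    (by intro x; simp)
  have h4 : ((Finset.univ.filter fun x : L => Algebra.trace K L (x ^ 2) = 0).card : ℤ)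
      = (Finset.univ.filter fun t : L => Algebra.trace K L t = 0).card := by
    rw [h]
    push_cast
    have h5 : ∀ t ∈ Finset.univ.filter (fun t : L => Algebra.trace K L t = 0),
        (((Finset.univ.filter fun x : L => Algebra.trace K L (x ^ 2) = 0).filter
          fun x => x ^ 2 = t).card : ℤ) = quadraticChar L t + 1 := by
      intro t ht
      rw [← quadraticChar_card_sqrts h2L t]
      congr 2
      ext x
      simp only [Finset.mem_filter, Finset.mem_univ, true_and, Set.mem_toFinset,
        Set.mem_ofPred_eq] at ht ⊢
      constructor
      · exact fun h => h.2
      · rintro rfl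
        exact ⟨ht, rfl⟩
    rw [Finset.sum_congr rfl h5, Finset.sum_add_distrib, Finset.sum_filter, hzero]
    simp
  exact_mod_cast h4

def psi (K L : Type) [Field K] [Field L] [Fintype K] [Algebra K L] (χ : AddChar K ℂ) :
    AddChar L ℂ :=
  χ.compAddMonoidHom (Algebra.trace K L).toAddMonoidHom

lemma psi_apply (χ : AddChar K ℂ) (x : L) : psi K L χ x = χ (Algebra.trace K L x) := rfl

lemma psi_prim (χ : AddChar K ℂ) (hχ : χ.IsPrimitive) : (psi K L χ).IsPrimitive := by
  apply AddChar.IsPrimitive.of_ne_one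
  intro h
  apply hχ (one_ne_zero)
  ext y
  obtain ⟨x, rfl⟩ := Algebra.trace_surjective K L y
  have := DFunLike.congr_fun h x
  simpa [psi_apply] using this

/-- quadric sum -/
lemma card_quadric_char (χ : AddChar K ℂ) (hχ : χ.IsPrimitive) :
    ∑ y : K, ∑ x : L, χ (y * Algebra.trace K L (x ^ 2)) =
      Fintype.card K * (Finset.univ.filter fun x : L => Algebra.trace K L (x ^ 2) = 0).card := by
  rw [Finset.sum_comm]
  simp_rw [AddChar.sum_mulShift _ hχ]
  push_cast
  rw [← Finset.sum_filter, Finset.sum_const, nsmul_eq_mul, mul_comm]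

lemma complete_sq (h2 : (2 : K) ≠ 0) (χ : AddChar K ℂ) (b : L) (c y z : K) (hy : y ≠ 0) :
    ∑ x : L, χ (y * Algebra.trace K L (x ^ 2)) * χ (z * (Algebra.trace K L (b * x) + c))
      = (∑ x : L, χ (y * Algebra.trace K L (x ^ 2))) *
        χ (-(Algebra.trace K L (b ^ 2) / (4 * y)) * z ^ 2 + c * z) := by
  rw [← Equiv.sum_comp (Equiv.subRight ((z / (2 * y)) • b)), Finset.sum_mul]
  refine Finset.sum_congr rfl fun x _ => ?_
  rw [← AddChar.map_add_eq_mul, ← AddChar.map_add_eq_mul]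
  congr 1
  have e1 : (x - (z / (2 * y)) • b) ^ 2
      = x ^ 2 - (2 * (z / (2 * y))) • (b * x) + (z / (2 * y)) ^ 2 • b ^ 2 := by
    simp only [Algebra.smul_def, map_mul, map_pow, map_ofNat]
    ring
  have e2 : b * (x - (z / (2 * y)) • b) = b * x - (z / (2 * y)) • b ^ 2 := by
    simp only [Algebra.smul_def]
    ring
  simp only [Equiv.subRight_apply, e1, e2, map_add, map_sub, map_smul, smul_eq_mul]
  have h4 : (4 : K) = 2 * 2 := by norm_num
  rw [h4]
  field_simp
  ring

lemma count_char (χ : AddChar K ℂ) (hχ : χ.IsPrimitive) (b : L) (c : K) :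
    ∑ y : K, ∑ z : K, ∑ x : L,
        χ (y * Algebra.trace K L (x ^ 2)) * χ (z * (Algebra.trace K L (b * x) + c))
      = (Fintype.card K : ℂ) ^ 2 * (Finset.univ.filter fun x : L =>
          Algebra.trace K L (x ^ 2) = 0 ∧ Algebra.trace K L (b * x) + c = 0).card := by
  have h1 : ∀ y : K, ∑ z : K, ∑ x : L,
        χ (y * Algebra.trace K L (x ^ 2)) * χ (z * (Algebra.trace K L (b * x) + c))
      = ∑ x : L, χ (y * Algebra.trace K L (x ^ 2)) *
        ∑ z : K, χ (z * (Algebra.trace K L (b * x) + c)) := by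
    intro y
    rw [Finset.sum_comm]
    simp_rw [Finset.mul_sum]
  simp_rw [h1]
  rw [Finset.sum_comm]
  simp_rw [← Finset.sum_mul, AddChar.sum_mulShift _ hχ]
  push_cast
  simp_rw [ite_zero_mul_ite_zero]
  rw [← Finset.sum_filter, Finset.sum_const, nsmul_eq_mul]
  ring

lemma zero_term (χ : AddChar K ℂ) (hχ : χ.IsPrimitive) (b : L) (hb : b ≠ 0) (c : K) :
    ∑ z : K, ∑ x : L,
        χ (0 * Algebra.trace K L (x ^ 2)) * χ (z * (Algebra.trace K L (b * x) + c))
      = (Fintype.card L : ℂ) := by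
  have h1 : ∀ z : K, ∑ x : L,
        χ (0 * Algebra.trace K L (x ^ 2)) * χ (z * (Algebra.trace K L (b * x) + c))
      = χ (z * c) * ∑ x : L, psi K L χ (x * (z • b)) := by
    intro z
    rw [Finset.mul_sum]
    refine Finset.sum_congr rfl fun x _ => ?_
    rw [psi_apply, ← AddChar.map_add_eq_mul, ← AddChar.map_add_eq_mul]
    congr 1
    have : x * z • b = z • (b * x) := by
      simp only [Algebra.smul_def]
      ring
    rw [this, map_smul, smul_eq_mul]
    ring
  simp_rw [h1, AddChar.sum_mulShift _ (psi_prim χ hχ)]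
  rw [Finset.sum_eq_single 0]
  · simp
  · intro z _ hz
    simp [hz, hb]
  · simp

lemma count_bound (h2K : ringChar K ≠ 2) (h2L : ringChar L ≠ 2) (j q : ℕ)
    (hq : Fintype.card K = q) (hL : Fintype.card L = q ^ (2 * j + 3))
    (hm : Odd (Module.finrank K L)) (b : L) (hb : b ≠ 0) (c : K) :
    (Finset.univ.filter fun x : L =>
          Algebra.trace K L (x ^ 2) = 0 ∧ Algebra.trace K L (b * x) + c = 0).card
      ≤ q ^ (2 * j + 1) + (q - 1) * q ^ j := by
  have h2 : (2 : K) ≠ 0 := Ring.two_ne_zero h2K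
  have h2' : (2 : L) ≠ 0 := Ring.two_ne_zero h2L
  have hq1 : 1 ≤ q := by
    rw [← hq]
    exact Fintype.card_pos
  set χ := AddChar.FiniteField.primitiveChar_to_Complex K with hχdef
  have hχ : χ.IsPrimitive := AddChar.FiniteField.primitiveChar_to_Complex_isPrimitive K
  set N := (Finset.univ.filter fun x : L =>
          Algebra.trace K L (x ^ 2) = 0 ∧ Algebra.trace K L (b * x) + c = 0).card with hN
  set T : K → ℂ := fun y => ∑ x : L, χ (y * Algebra.trace K L (x ^ 2)) with hT
  set A : K → ℂ := fun y =>
    ∑ z : K, χ (-(Algebra.trace K L (b ^ 2) / (4 * y)) * z ^ 2 + c * z) with hA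
  have hsumT : ∑ y ∈ Finset.univ.erase (0 : K), T y = 0 := by
    have h := card_quadric_char (L := L) χ hχ
    have h' := card_quadric (K := K) (L := L) h2K h2L hm
    rw [← Nat.cast_mul, h', ← Finset.add_sum_erase _ _ (Finset.mem_univ (0 : K))] at h
    have h0 : ∑ x : L, χ (0 * Algebra.trace K L (x ^ 2)) = (Fintype.card L : ℂ) := by simp
    rw [h0] at h
    exact add_eq_left.1 h
  have hmain : (q : ℂ) ^ 2 * N = (q : ℂ) ^ (2 * j + 3)
      + ∑ y ∈ Finset.univ.erase (0 : K), T y * A y := by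
    have h := count_char (L := L) χ hχ b c
    rw [← Finset.add_sum_erase _ _ (Finset.mem_univ (0 : K)), zero_term χ hχ b hb c, hq, hL] at h
    rw [← h]
    push_cast
    congr 1
    refine Finset.sum_congr rfl fun y hy => ?_
    have hy0 : y ≠ 0 := by simpa using hy
    simp_rw [complete_sq h2 χ b c y _ hy0]
    rw [← Finset.mul_sum]
  have hbound : ‖∑ y ∈ Finset.univ.erase (0 : K), T y * A y‖
      ≤ ((q : ℝ) - 1) * (q : ℝ) ^ (j + 2) := by
    by_cases hQ : Algebra.trace K L (b ^ 2) = 0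
    · have : ∀ y, A y = A 0 := by
        intro y
        simp only [hA, hQ, zero_div]
      simp_rw [this]
      rw [← Finset.sum_mul, hsumT]
      simp only [zero_mul, norm_zero]
      have : (1 : ℝ) ≤ q := by exact_mod_cast hq1
      have : (0 : ℝ) ≤ q - 1 := by linarith
      positivity
    · have hterm : ∀ y ∈ Finset.univ.erase (0 : K), ‖T y * A y‖ ≤ (q : ℝ) ^ (j + 2) := by
        intro y hy
        have hy0 : y ≠ 0 := by simpa using hy
        have hTn : ‖T y‖ ^ 2 = (q : ℝ) ^ (2 * j + 3) := by
          have := gauss_norm h2' (psi K L χ) (psi_prim χ hχ) (algebraMap K L y) 0 (by simpa using hy0)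
          rw [hL] at this
          push_cast at this
          rw [← this]
          congr 2
          refine Finset.sum_congr rfl fun x _ => ?_
          rw [psi_apply, zero_mul, add_zero, ← Algebra.smul_def, map_smul, smul_eq_mul]
        have hAn : ‖A y‖ ^ 2 = (q : ℝ) := by
          have h4 : (4 : K) ≠ 0 := by
            have h4 : (4 : K) = 2 * 2 := by norm_num
            rw [h4]
            exact mul_ne_zero h2 h2
          have := gauss_norm h2 χ hχ (-(Algebra.trace K L (b ^ 2) / (4 * y))) c
            (neg_ne_zero.2 (div_ne_zero hQ (mul_ne_zero h4 hy0)))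
          rw [hq] at this
          exact this
        apply le_of_sq_le_sq _ (by positivity)
        rw [norm_mul, mul_pow, hTn, hAn]
        apply le_of_eq
        ring
      refine (norm_sum_le _ _).trans ((Finset.sum_le_card_nsmul _ _ _ hterm).trans ?_)
      rw [Finset.card_erase_of_mem (Finset.mem_univ _), Finset.card_univ, hq, nsmul_eq_mul,
        Nat.cast_sub hq1, Nat.cast_one]
  have hreal : (q : ℝ) ^ 2 * N ≤ (q : ℝ) ^ (2 * j + 3) + ((q : ℝ) - 1) * (q : ℝ) ^ (j + 2) := by
    have h1 : ‖(q : ℂ) ^ 2 * N‖ = (q : ℝ) ^ 2 * N := by simp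
    rw [← h1, hmain]
    refine (norm_add_le _ _).trans (add_le_add (by simp) hbound)
  have hq0 : (0 : ℝ) < (q : ℝ) ^ 2 := by
    have : (0 : ℝ) < q := by exact_mod_cast hq1
    positivity
  have : (N : ℝ) ≤ (q : ℝ) ^ (2 * j + 1) + ((q : ℝ) - 1) * (q : ℝ) ^ j := by
    refine le_of_mul_le_mul_left ?_ hq0
    refine hreal.trans (le_of_eq ?_)
    ring
  have hc : ((q - 1 : ℕ) : ℝ) = (q : ℝ) - 1 := by
    rw [Nat.cast_sub hq1, Nat.cast_one]
  rw [← hc] at this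
  exact_mod_cast this

lemma lin_indep (m : ℕ) (hm : Module.finrank K L = m) (α : L)
    (hα : ∀ y : L, y ≠ 0 → ∃ k : ℕ, α ^ k = y) (v : Fin m → K)
    (hv : ∑ i, algebraMap K L (v i) * α ^ (i : ℕ) = 0) : v = 0 := by
  have htop : IntermediateField.adjoin K {α} = ⊤ := by
    rw [eq_top_iff]
    intro y _
    by_cases hy : y = 0
    · rw [hy]
      exact zero_mem _
    · obtain ⟨k, rfl⟩ := hα y hy
      exact pow_mem (IntermediateField.mem_adjoin_simple_self K α) k
  have hdeg := (Field.primitive_element_iff_minpoly_natDegree_eq K α).1 htop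
  have hli := linearIndependent_pow (K := K) α
  rw [hm] at hdeg
  rw [hdeg] at hli
  rw [Fintype.linearIndependent_iff] at hli
  ext i
  refine hli v ?_ i
  simpa [Algebra.smul_def] using hv

end

section
variable {ι F : Type} [Fintype ι] [Field F] [Fintype F]

lemma dual_iff (k : ℕ) (G : Fin k → ι → F) (u : (Fin k ⊕ ι) → F) :
    u ∈ dualCode (genCode k G) ↔ ∀ i, u (Sum.inl i) + ∑ d, u (Sum.inr d) * G i d = 0 := by
  have key : ∀ v : Fin k → F, ∑ i, u i * (Sum.elim v fun d => ∑ j, v j * G j d : _ → F) i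
      = ∑ i, v i * (u (Sum.inl i) + ∑ d, u (Sum.inr d) * G i d) := by
    intro v
    rw [Fintype.sum_sum_type]
    simp only [Sum.elim_inl, Sum.elim_inr, mul_add, Finset.sum_add_distrib, Finset.mul_sum]
    congr 1
    · exact Finset.sum_congr rfl fun i _ => mul_comm _ _
    · rw [Finset.sum_comm]
      refine Finset.sum_congr rfl fun i _ => Finset.sum_congr rfl fun d _ => ?_
      ring
  constructor
  · intro h i
    have := h _ ⟨Pi.single i 1, rfl⟩
    rw [key] at this
    simpa [Pi.single_apply] using this
  · rintro h _ ⟨v, rfl⟩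
    rw [key]
    exact Finset.sum_eq_zero fun i _ => by rw [h, mul_zero]

lemma card_dual_s13 (k : ℕ) (G : Fin k → ι → F) :
    Nat.card (dualCode (genCode k G)) = Fintype.card F ^ Fintype.card ι := by
  have e : dualCode (genCode k G) ≃ (ι → F) :=
    { toFun := fun u d => u.1 (Sum.inr d)
      invFun := fun w => ⟨Sum.elim (fun i => - ∑ d, w d * G i d) w, by
        rw [dual_iff]
        intro i
        simp⟩
      left_inv := by
        rintro ⟨u, hu⟩
        rw [dual_iff] at hu
        apply Subtype.ext
        ext x
        cases x with
        | inl i => simpa using (eq_neg_of_add_eq_zero_left (hu i)).symm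
        | inr d => rfl
      right_inv := fun w => rfl }
  rw [Nat.card_congr e]
  simp

end

theorem stmt13 (p e q m : ℕ) (hp : p.Prime) (hodd : Odd p) (he : 0 < e)
    (hq : q = p ^ e) (hmodd : Odd m) (hm3 : 3 ≤ m)
    (Fq Fm : Type) [Field Fq] [Field Fm] [Fintype Fq] [Fintype Fm] [Algebra Fq Fm]
    (hcq : Fintype.card Fq = q) (hcm : Fintype.card Fm = q ^ m)
    -- `α` is a primitive element of `F_{q^m}`
    (α : Fm) (hα : ∀ y : Fm, y ≠ 0 → ∃ k : ℕ, α ^ k = y)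
    -- the matrix `G₂`
    (G2 : Fin (m + 1) → {x : Fm // Algebra.trace Fq Fm (x ^ 2) = 0} → Fq)
    (hG2 : ∀ k d, G2 k d =
      if (k : ℕ) = 0 then 1
      else Algebra.trace Fq Fm (α ^ ((k : ℕ) - 1) * d.1)
        + (if (k : ℕ) = 2 then 1 else 0))
    (C' : Set ((Fin (m + 1) ⊕ {x : Fm // Algebra.trace Fq Fm (x ^ 2) = 0}) → Fq))
    (hC' : C' = genCode (m + 1) G2) :
    -- length `q^{m-1} + m + 1`
    Fintype.card (Fin (m + 1) ⊕ {x : Fm // Algebra.trace Fq Fm (x ^ 2) = 0})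
      = q ^ (m - 1) + m + 1 ∧
    -- dimension `m + 1`
    Nat.card C' = q ^ (m + 1) ∧
    -- minimum distance at least `(q-1)q^{(m-3)/2}(q^{(m-1)/2} - 1) + 1`
    (∀ c ∈ C', c ≠ 0 →
      (q - 1) * q ^ ((m - 3) / 2) * (q ^ ((m - 1) / 2) - 1) + 1 ≤ hammingNorm c) ∧
    -- the dual has dimension `q^{m-1}` and minimum distance between `2` and `3`
    Nat.card (dualCode C') = q ^ (q ^ (m - 1)) ∧
    (∃ d : ℕ, IsMinDist (dualCode C') d ∧ 2 ≤ d ∧ d ≤ 3) := by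
  have hqodd : Odd q := hq ▸ hodd.pow
  have hq2 : 2 ≤ q := by
    rw [hq]
    exact hp.two_le.trans (Nat.le_self_pow he.ne' p)
  have hfin : Module.finrank Fq Fm = m := by
    have h := Module.card_eq_pow_finrank (K := Fq) (V := Fm)
    rw [hcm, hcq] at h
    exact (Nat.pow_right_injective hq2 h).symm
  have hoddfin : Odd (Module.finrank Fq Fm) := hfin ▸ hmodd
  have h2K : ringChar Fq ≠ 2 := by
    intro h
    have := FiniteField.even_card_iff_char_two.1 h
    rw [hcq] at this
    exact absurd hqodd (Nat.not_odd_iff.2 this)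
  have h2L : ringChar Fm ≠ 2 := by
    intro h
    have := FiniteField.even_card_iff_char_two.1 h
    rw [hcm] at this
    exact absurd hqodd.pow (Nat.not_odd_iff.2 this)
  obtain ⟨j, rfl⟩ : ∃ j, m = 2 * j + 3 := by
    obtain ⟨k, hk⟩ := hmodd
    exact ⟨k - 1, by omega⟩
  have e1 : (2 * j + 3 - 3) / 2 = j := by omega
  have e2 : (2 * j + 3 - 1) / 2 = j + 1 := by omega
  have e3 : 2 * j + 3 - 1 = 2 * j + 2 := by omega
  rw [e1, e2, e3]
  have hD : Fintype.card {x : Fm // Algebra.trace Fq Fm (x ^ 2) = 0} = q ^ (2 * j + 2) := by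
    have h := card_quadric (K := Fq) (L := Fm) h2K h2L hoddfin
    rw [Fintype.card_subtype]
    rw [hcq, hcm, pow_succ' q (2 * j + 2)] at h
    exact Nat.eq_of_mul_eq_mul_left (by omega) h
  have hword : ∀ (v : Fin (2 * j + 3 + 1) → Fq) (d : {x : Fm // Algebra.trace Fq Fm (x ^ 2) = 0}),
      ∑ k, v k * G2 k d = Algebra.trace Fq Fm
        ((∑ i : Fin (2 * j + 3), algebraMap Fq Fm (v i.succ) * α ^ (i : ℕ)) * d.1)
        + (v 0 + ∑ i : Fin (2 * j + 3), v i.succ * (if (i : ℕ) + 1 = 2 then 1 else 0)) := by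
    intro v d
    rw [Fin.sum_univ_succ, hG2, Finset.sum_mul, map_sum]
    have : ∀ i : Fin (2 * j + 3), v i.succ * G2 i.succ d
        = Algebra.trace Fq Fm (algebraMap Fq Fm (v i.succ) * α ^ (i : ℕ) * d.1)
          + v i.succ * (if (i : ℕ) + 1 = 2 then 1 else 0) := by
      intro i
      rw [hG2, mul_assoc, ← Algebra.smul_def, map_smul, smul_eq_mul, ← mul_add]
      simp
    rw [Finset.sum_congr rfl fun i _ => this i, Finset.sum_add_distrib]
    simp only [Fin.val_zero, if_true, mul_one]
    ring
  refine ⟨?_, ?_, ?_, ?_, ?_⟩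
  · rw [Fintype.card_sum, Fintype.card_fin, hD]
    ring
  · have : C' = Set.range (fun v : Fin (2 * j + 3 + 1) → Fq =>
        (Sum.elim v fun d => ∑ k, v k * G2 k d :
          (Fin (2 * j + 3 + 1) ⊕ {x : Fm // Algebra.trace Fq Fm (x ^ 2) = 0}) → Fq)) := by
      rw [hC']
      ext w
      constructor
      · rintro ⟨v, rfl⟩
        exact ⟨v, rfl⟩
      · rintro ⟨v, rfl⟩
        exact ⟨v, rfl⟩
    rw [this, Nat.card_range_of_injective]
    · simp [hcq]
    · intro v w h
      ext k
      exact congrFun h (Sum.inl k)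
  · intro c hc hc0
    rw [hC'] at hc
    obtain ⟨v, rfl⟩ := hc
    have hv : v ≠ 0 := by
      rintro rfl
      apply hc0
      ext k
      cases k <;> simp
    have hw : hammingNorm (Sum.elim v fun d => ∑ k, v k * G2 k d :
          (Fin (2 * j + 3 + 1) ⊕ {x : Fm // Algebra.trace Fq Fm (x ^ 2) = 0}) → Fq)
        = hammingNorm v + (Finset.univ.filter fun d => ∑ k, v k * G2 k d ≠ 0).card := by
      simp only [hammingNorm, Finset.card_filter, Fintype.sum_sum_type, Sum.elim_inl, Sum.elim_inr]
      congr!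
    have hv1 : 1 ≤ hammingNorm v := by
      have := hammingNorm_ne_zero_iff.2 hv
      omega
    rw [hw]
    have hsplit := Finset.card_filter_add_card_filter_not
      (s := (Finset.univ : Finset {x : Fm // Algebra.trace Fq Fm (x ^ 2) = 0}))
      (fun d => ∑ k, v k * G2 k d = 0)
    rw [Finset.card_univ, hD] at hsplit
    obtain ⟨r, rfl⟩ : ∃ r, q = r + 1 := ⟨q - 1, by omega⟩
    have hpow : 1 ≤ (r + 1) ^ (j + 1) := Nat.one_le_pow _ _ (by omega)
    have harith : (r + 1) ^ (2 * j + 2)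
        = r * (r + 1) ^ j * ((r + 1) ^ (j + 1) - 1) + ((r + 1) ^ (2 * j + 1) + r * (r + 1) ^ j) := by
      obtain ⟨s, hs⟩ : ∃ s, (r + 1) ^ (j + 1) = s + 1 := ⟨_, (Nat.sub_add_cancel hpow).symm⟩
      have h1 : (r + 1) ^ (2 * j + 1) = (r + 1) ^ j * (s + 1) := by
        rw [← hs]
        ring
      have h2 : (r + 1) ^ (2 * j + 2) = (r + 1) * ((r + 1) ^ j * (s + 1)) := by
        rw [← h1]
        ring
      rw [h2, h1, hs, Nat.add_sub_cancel]
      ring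
    have hcount : (Finset.univ.filter fun d : {x : Fm // Algebra.trace Fq Fm (x ^ 2) = 0} =>
        ∑ k, v k * G2 k d = 0).card ≤ (r + 1) ^ (2 * j + 1) + r * (r + 1) ^ j := by
      by_cases hb : (∑ i : Fin (2 * j + 3), algebraMap Fq Fm (v i.succ) * α ^ (i : ℕ)) = 0
      · have hvs := lin_indep (2 * j + 3) hfin α hα (fun i => v i.succ) hb
        have hvs' : ∀ i : Fin (2 * j + 3), v i.succ = 0 := fun i => congrFun hvs i
        have hv0 : v 0 ≠ 0 := by
          intro h0
          apply hv
          ext k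
          refine Fin.cases h0 hvs' k
        rw [Finset.filter_false_of_mem]
        · simp
        · intro d _
          rw [hword, hb]
          simp [hvs', hv0]
      · refine le_trans (le_of_eq ?_) (count_bound h2K h2L j (r + 1) hcq hcm hoddfin _ hb
          (v 0 + ∑ i : Fin (2 * j + 3), v i.succ * (if (i : ℕ) + 1 = 2 then 1 else 0)))
        refine Finset.card_bij (fun d _ => d.1) ?_ ?_ ?_
        · intro d hd
          simp only [Finset.mem_filter, Finset.mem_univ, true_and] at hd ⊢
          rw [hword] at hd
          exact ⟨d.2, hd⟩
        · intro a _ b _ h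
          exact Subtype.ext h
        · intro x hx
          simp only [Finset.mem_filter, Finset.mem_univ, true_and] at hx
          refine ⟨⟨x, hx.1⟩, ?_, rfl⟩
          simp only [Finset.mem_filter, Finset.mem_univ, true_and]
          rw [hword]
          exact hx.2
    rw [Nat.add_sub_cancel]
    simp only [ne_eq] at hsplit ⊢
    omega
  · rw [hC', card_dual_s13, hcq, hD]
  · have hlow : ∀ c ∈ dualCode C', c ≠ 0 → 2 ≤ hammingNorm c := by
      intro c hc hc0
      by_contra hlt
      have h1 : hammingNorm c ≤ 1 := by omega
      have hone : ∀ a b, c a ≠ 0 → c b ≠ 0 → a = b := by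
        intro a b ha hb
        exact Finset.card_le_one.1 h1 a (by simpa using ha) b (by simpa using hb)
      rw [hC', dual_iff] at hc
      by_cases hd : ∃ d, c (Sum.inr d) ≠ 0
      · obtain ⟨d, hd⟩ := hd
        have h0 := hc 0
        have hz : c (Sum.inl 0) = 0 := by
          by_contra hne
          exact absurd (hone _ _ hne hd) (by simp)
        rw [hz, zero_add, Finset.sum_eq_single d] at h0
        · rw [hG2] at h0
          simp at h0
          exact hd h0
        · intro d' _ hd'
          have : c (Sum.inr d') = 0 := by
            by_contra hne
            exact hd' (Sum.inr_injective (hone _ _ hne hd))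
          rw [this, zero_mul]
        · simp
      · push Not at hd
        apply hc0
        ext x
        cases x with
        | inl i => simpa [hd] using hc i
        | inr d => exact hd d
    have hup : ∃ c ∈ dualCode C', c ≠ 0 ∧ hammingNorm c ≤ 3 := by
      let z : {x : Fm // Algebra.trace Fq Fm (x ^ 2) = 0} := ⟨0, by simp⟩
      let t : Fin (2 * j + 3 + 1) := ⟨2, by omega⟩
      refine ⟨Sum.elim (fun i => - G2 i z) (Pi.single z 1), ?_, ?_, ?_⟩
      · rw [hC', dual_iff]
        intro i
        simp [Pi.single_apply]
      · intro h
        have := congrFun h (Sum.inr z)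
        simp at this
      · have hsub : (Finset.univ.filter fun i => (Sum.elim (fun i => - G2 i z) (Pi.single z 1) :
            (Fin (2 * j + 3 + 1) ⊕ {x : Fm // Algebra.trace Fq Fm (x ^ 2) = 0}) → Fq) i ≠ 0)
            ⊆ {Sum.inl 0, Sum.inl t, Sum.inr z} := by
          intro x hx
          rw [Finset.mem_filter] at hx
          have hx := hx.2
          cases x with
          | inl i =>
            simp only [Sum.elim_inl, hG2, z, mul_zero, map_zero, zero_add] at hx
            by_cases hi0 : (i : ℕ) = 0
            · have : i = 0 := Fin.ext hi0
              simp [this]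
            · by_cases hi2 : (i : ℕ) = 2
              · have : i = t := Fin.ext hi2
                simp [this]
              · simp [hi0, hi2] at hx
          | inr d =>
            by_cases hdz : d = z
            · simp [hdz]
            · simp [hdz] at hx
        exact (Finset.card_le_card hsub).trans Finset.card_le_three
    have hex : ∃ d, ∃ c ∈ dualCode C', c ≠ 0 ∧ hammingNorm c = d := by
      obtain ⟨c, h1, h2, _⟩ := hup
      exact ⟨_, c, h1, h2, rfl⟩
    refine ⟨Nat.find hex, ⟨Nat.find_spec hex, ?_⟩, ?_, ?_⟩
    · intro c h1 h2
      exact Nat.find_min' hex ⟨c, h1, h2, rfl⟩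
    · obtain ⟨c, h1, h2, h3⟩ := Nat.find_spec hex
      rw [← h3]
      exact hlow c h1 h2
    · obtain ⟨c, h1, h2, h3⟩ := hup
      exact (Nat.find_min' hex ⟨c, h1, h2, rfl⟩).trans h3
end
end
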